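/- arXiv:1712.03247 — 2 statements merged into one kernel-verified Lean document; each statement's English description precedes it below -/
import Mathlib

section
/- For every integer k ≥ 3 there exists a constant C > 0 (depending only on k) such that for every integer r ≥ 2 and all sufficiently large n there exists a finite C_k-colorable graph G with partition (V_1, ..., V_k) satisfying: (i) for every family 𝓑 of n pairwise vertex-disjoint proper (k-1)-paths in G and every A ⊆ V(G) \ ⋃_{B∈𝓑} V(B) with |A| ≤ n, one has y_{A,𝓑} < t_𝓑/(2kr); (ii) for every C' ⊆ V(G) with |C'| ≤ (k-1)n, one has z_{C'} < t_k/(2r); and (iii) t_k ≤ C · r^k · (n · log n)^{k/2}. -/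
/-!
The graph is a random subgraph of the balanced blow-up of `C_k`: each of the `k` parts has
`N = K r n` vertices, where `K = 32 k³ 16^k`, and each pair in consecutive parts is an edge
independently with probability `p`, where `4 log n ≤ n p² ≤ 16 log n`. Probability is replaced by
counting: with `p = 1 / (q + 1)`, a sample is a function `Sym2 V → Fin (q + 1)`, and the edges are
the pairs in consecutive parts that it sends to `0`.

For large `n` some sample is pseudorandom (`IsPseudorandom`): the degrees into the next part are
within a factor `4` of `N p`, the codegrees of vertices two parts apart, taken in the part between
them, are within a factor `4` of `N p²`, and for every matching `M` of at most `n` pairs and every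
set `U` of at most `k n` other vertices, at most `4 k n² p²` pairs `(e, u) ∈ M × U` have `u` joined
to both ends of `e`. Each property concerns a sum of independent indicators, so Chernoff bounds
(`card_upper_tail`, `card_lower_tail`) apply. The union bound over the `(k N)^((k + 2) n)` pairs
`(M, U)` is affordable because a fixed pair fails with probability at most `exp (-2 k n² p²)`,
and `n p² ≥ 4 log n` (`exists_isPseudorandom`, `union_bound_lt_one`).

The three conclusions are deterministic consequences of pseudorandomness.

* A proper `(k-1)`-path runs monotonically around the cycle, so its extensions correspond to the
  common neighbours of its ends in the missing part. Hence `t_𝓑 ≥ n · N p² / 4` (`le_tBCount`).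
  In `y_{A,𝓑}` only the at most `k n` vertices of `A ∪ ⋃ 𝓑` may be added. Paths with the same
  missing part have end pairs forming a matching outside that part, so `y_{A,𝓑} ≤ k · 4 k n² p²`
  (`yCount_le`), and the first conclusion holds because `N` exceeds `32 k³ r n`.
* Choosing the vertices of a cycle one at a time, each vertex lies in between
  `(N p / 4)^(k-2) (N p² / 4)` and `(4 N p)^(k-2) (4 N p²)` proper cycles
  (`card_through_bounds`). Comparing `k n` times the upper bound with `N` times the lower bound
  gives the second conclusion.
* The same upper bound gives `t_k ≤ (4 N p)^k`, which is at most
  `(16 K r)^k (n log n)^(k/2)`.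
-/

open Finset
open scoped Classical

/-- `G` is `C_k`-colorable with partition given by the part map `P` (part `i` is `P ⁻¹ i`,
`i < k`): every edge joins part `i` and part `i+1 (mod k)` for some `i`. -/
def CkColorable {V : Type*} (k : ℕ) (G : SimpleGraph V) (P : V → ℕ) : Prop :=
  (∀ v, P v < k) ∧ ∀ u v, G.Adj u v → (P v = (P u + 1) % k ∨ P u = (P v + 1) % k)

/-- `S` is the vertex set of a proper `k`-cycle of `G`: a cycle `v_1 v_2 ⋯ v_k`
with `v_i` in part `i` for each `i`. -/
def IsProperCycle {V : Type*} (k : ℕ) (G : SimpleGraph V) (P : V → ℕ) (S : Finset V) : Prop :=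
  ∃ w : ℕ → V, S = (Finset.range k).image w ∧ (∀ i < k, P (w i) = i) ∧
    ∀ i < k, G.Adj (w i) (w ((i + 1) % k))

/-- `S` is the vertex set of a proper `(k-1)`-path of `G`: a path on `k-1` distinct vertices
meeting each part in at most one vertex. -/
def IsProperPath {V : Type*} (k : ℕ) (G : SimpleGraph V) (P : V → ℕ) (S : Finset V) : Prop :=
  ∃ w : ℕ → V, S = (Finset.range (k - 1)).image w ∧
    (∀ i < k - 1, ∀ j < k - 1, i ≠ j → w i ≠ w j) ∧
    (∀ i, i + 1 < k - 1 → G.Adj (w i) (w (i + 1))) ∧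
    (∀ i < k - 1, ∀ j < k - 1, i ≠ j → P (w i) ≠ P (w j))

/-- The finset of (vertex sets of) proper `k`-cycles of `G`. -/
noncomputable def properCycles {V : Type*} [Fintype V] (k : ℕ) (G : SimpleGraph V)
    (P : V → ℕ) : Finset (Finset V) :=
  Finset.univ.filter (fun S => IsProperCycle k G P S)

/-- `t_k`: the total number of proper `k`-cycles of `G`. -/
noncomputable def tkCount {V : Type*} [Fintype V] (k : ℕ) (G : SimpleGraph V) (P : V → ℕ) : ℕ :=
  (properCycles k G P).card

/-- `t_𝓑`: the number of proper `k`-cycles of `G` extending some `B ∈ 𝓑`. -/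
noncomputable def tBCount {V : Type*} [Fintype V] (k : ℕ) (G : SimpleGraph V) (P : V → ℕ)
    (𝓑 : Finset (Finset V)) : ℕ :=
  ((properCycles k G P).filter (fun S => ∃ B ∈ 𝓑, B ⊆ S)).card

/-- `y_{A,𝓑}`: the number of proper `k`-cycles of `G` that extend some `B ∈ 𝓑` with a
vertex belonging to `A ∪ ⋃_{B ∈ 𝓑} V(B)`. -/
noncomputable def yCount {V : Type*} [Fintype V] [DecidableEq V] (k : ℕ) (G : SimpleGraph V)
    (P : V → ℕ) (A : Finset V) (𝓑 : Finset (Finset V)) : ℕ :=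
  ((properCycles k G P).filter
    (fun S => ∃ B ∈ 𝓑, B ⊆ S ∧ ∃ u ∈ S \ B, u ∈ A ∪ 𝓑.biUnion id)).card

/-- `z_C`: the number of proper `k`-cycles of `G` intersecting `C`. -/
noncomputable def zCount {V : Type*} [Fintype V] (k : ℕ) (G : SimpleGraph V) (P : V → ℕ)
    (C : Finset V) : ℕ :=
  ((properCycles k G P).filter (fun S => ∃ u ∈ S, u ∈ C)).card

/-- `𝓑` is a family of `n` pairwise vertex-disjoint proper `(k-1)`-paths of `G`. -/
def IsGoodFamily {V : Type*} (k : ℕ) (G : SimpleGraph V) (P : V → ℕ) (n : ℕ)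
    (𝓑 : Finset (Finset V)) : Prop :=
  𝓑.card = n ∧ (∀ B ∈ 𝓑, IsProperPath k G P B) ∧
    ∀ B ∈ 𝓑, ∀ B' ∈ 𝓑, B ≠ B' → Disjoint B B'

/-! ### Proper cycles and forward paths -/

theorem eq_of_cast_eq {k : ℕ} {a b : ℕ} (ha : a < k) (hb : b < k) (h : (a : ZMod k) = b) :
    a = b := by
  rw [ZMod.natCast_eq_natCast_iff'] at h
  rwa [Nat.mod_eq_of_lt ha, Nat.mod_eq_of_lt hb] at h

theorem sub_two_cast {k : ℕ} (hk : 3 ≤ k) : ((k - 2 : ℕ) : ZMod k) = -2 := by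
  rw [Nat.cast_sub (by omega)]; simp

theorem sub_one_cast {k : ℕ} (hk : 3 ≤ k) : ((k - 1 : ℕ) : ZMod k) = -1 := by
  rw [Nat.cast_sub (by omega)]; simp

theorem two_ne_zero_zmod {k : ℕ} (hk : 3 ≤ k) : (2 : ZMod k) ≠ 0 := by
  intro h
  have h2 : ((2 : ℕ) : ZMod k) = ((0 : ℕ) : ZMod k) := by exact_mod_cast h
  have := eq_of_cast_eq (k := k) (by omega) (by omega) h2
  omega

theorem one_ne_zero_zmod {k : ℕ} (hk : 3 ≤ k) : (1 : ZMod k) ≠ 0 := by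
  intro h
  have h2 : ((1 : ℕ) : ZMod k) = ((0 : ℕ) : ZMod k) := by exact_mod_cast h
  have := eq_of_cast_eq (k := k) (by omega) (by omega) h2
  omega

/-- `w 0, …, w l` is a path running forward through the consecutive parts `j, …, j + l`. -/
def IsForwardPath {V : Type*} {k : ℕ} (G : SimpleGraph V) (P : V → ℕ) (l : ℕ)
    (j : ZMod k) (w : ℕ → V) : Prop :=
  (∀ i ≤ l, (P (w i) : ZMod k) = j + i) ∧ ∀ i < l, G.Adj (w i) (w (i + 1))

theorem isForwardPath_of_step {V : Type*} {k : ℕ} {G : SimpleGraph V} {P : V → ℕ} {l : ℕ}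
    {w : ℕ → V} (hadj : ∀ i < l, G.Adj (w i) (w (i + 1)))
    (hstep : ∀ i < l, (P (w (i + 1)) : ZMod k) = P (w i) + 1) :
    IsForwardPath G P l (P (w 0) : ZMod k) w := by
  refine ⟨fun i => ?_, hadj⟩
  induction i with
  | zero => intro _; simp
  | succ i ih =>
    intro hi
    rw [hstep i (by omega), ih (by omega)]
    push_cast; ring

/-- Along a proper path the part index cannot turn back, since the parts are distinct; so the
path or its reversal runs forward. -/
theorem exists_isForwardPath {V : Type*} {k : ℕ} {G : SimpleGraph V} {P : V → ℕ}
    (hk : 3 ≤ k) (hP : ∀ v, P v < k)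
    (hadj : ∀ u v, G.Adj u v → (P v : ZMod k) = P u + 1 ∨ (P u : ZMod k) = P v + 1)
    {B : Finset V} (hB : IsProperPath k G P B) :
    ∃ (j : ZMod k) (w : ℕ → V), IsForwardPath G P (k - 2) j w ∧
      B = (range (k - 1)).image w := by
  obtain ⟨w, hBw, -, hw, hne⟩ := hB
  have hne' : ∀ i, i + 2 < k - 1 → (P (w (i + 2)) : ZMod k) ≠ P (w i) := by
    intro i hi h
    exact hne (i + 2) hi i (by omega) (by omega) (eq_of_cast_eq (hP _) (hP _) h)
  rcases hadj _ _ (hw 0 (by omega)) with h0 | h0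
  · have hstep : ∀ i, i + 1 < k - 1 → (P (w (i + 1)) : ZMod k) = P (w i) + 1 := by
      intro i
      induction i with
      | zero => intro _; exact h0
      | succ i ih =>
        intro hi
        rcases hadj _ _ (hw (i + 1) hi) with h | h
        · exact h
        · exfalso
          rw [ih (by omega)] at h
          exact hne' i hi (add_right_cancel h).symm
    exact ⟨_, w, isForwardPath_of_step (fun i hi => hw i (by omega))
      (fun i hi => hstep i (by omega)), hBw⟩
  · have hstep : ∀ i, i + 1 < k - 1 → (P (w i) : ZMod k) = P (w (i + 1)) + 1 := by
      intro i
      induction i with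
      | zero => intro _; exact h0
      | succ i ih =>
        intro hi
        rcases hadj _ _ (hw (i + 1) hi) with h | h
        · exfalso
          rw [← ih (by omega)] at h
          exact hne' i hi h
        · exact h
    refine ⟨_, fun i => w (k - 2 - i), isForwardPath_of_step ?_ ?_, ?_⟩
    · intro i hi
      have := hw (k - 2 - (i + 1)) (by omega)
      rw [show k - 2 - (i + 1) + 1 = k - 2 - i by omega] at this
      exact this.symm
    · intro i hi
      have := hstep (k - 2 - (i + 1)) (by omega)
      rwa [show k - 2 - (i + 1) + 1 = k - 2 - i by omega] at this
    · rw [hBw]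
      ext v
      simp only [Finset.mem_image, Finset.mem_range]
      constructor
      · rintro ⟨i, hi, rfl⟩
        exact ⟨k - 2 - i, by omega, by congr 1; omega⟩
      · rintro ⟨i, hi, rfl⟩
        exact ⟨k - 2 - i, by omega, rfl⟩

section Deterministic

variable {V : Type*} [Fintype V] {k : ℕ} [NeZero k] {G : SimpleGraph V} {P : V → ℕ}

theorem eq_mod_iff {a b : ℕ} (ha : a < k) : a = (b + 1) % k ↔ (a : ZMod k) = b + 1 := by
  constructor
  · rintro h
    rw [h, ZMod.natCast_mod]
    push_cast
    rfl
  · intro h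
    apply eq_of_cast_eq ha (Nat.mod_lt _ (NeZero.pos k))
    rw [ZMod.natCast_mod]
    push_cast
    exact h

theorem val_add_one_eq (z : ZMod k) : (z + 1).val = (z.val + 1) % k := by
  rw [ZMod.val_add, ZMod.val_one_eq_one_mod, Nat.add_mod_mod]

/-- A proper cycle as a closed walk indexed by `ZMod k`, which makes all parts play the same
role. -/
theorem mem_properCycles_iff (hP : ∀ v, P v < k) {S : Finset V} :
    S ∈ properCycles k G P ↔ ∃ W : ZMod k → V, (∀ v, v ∈ S ↔ ∃ z, W z = v) ∧
      (∀ z, (P (W z) : ZMod k) = z) ∧ ∀ z, G.Adj (W z) (W (z + 1)) := by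
  rw [properCycles, Finset.mem_filter, and_iff_right (Finset.mem_univ _), IsProperCycle]
  constructor
  · rintro ⟨w, rfl, h1, h2⟩
    refine ⟨fun z => w z.val, ?_, ?_, ?_⟩
    · intro v
      simp only [Finset.mem_image, Finset.mem_range]
      constructor
      · rintro ⟨i, hi, rfl⟩
        exact ⟨i, by rw [ZMod.val_cast_of_lt hi]⟩
      · rintro ⟨z, rfl⟩
        exact ⟨z.val, ZMod.val_lt z, rfl⟩
    · intro z
      simp only [h1 _ (ZMod.val_lt z), ZMod.natCast_zmod_val]
    · intro z
      simp only [val_add_one_eq]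
      exact h2 _ (ZMod.val_lt z)
  · rintro ⟨W, h0, h1, h2⟩
    refine ⟨fun i => W i, ?_, ?_, ?_⟩
    · ext v
      rw [h0]
      simp only [Finset.mem_image, Finset.mem_range]
      constructor
      · rintro ⟨z, rfl⟩
        exact ⟨z.val, ZMod.val_lt z, by simp⟩
      · rintro ⟨i, hi, rfl⟩
        exact ⟨i, rfl⟩
    · intro i hi
      exact eq_of_cast_eq (hP _) hi (h1 _)
    · intro i hi
      have := h2 (i : ZMod k)
      simpa [ZMod.natCast_mod] using this

/-- The proper cycles containing all of `w 0, …, w l`. -/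
noncomputable def extensions (k : ℕ) (G : SimpleGraph V) (P : V → ℕ) (l : ℕ) (w : ℕ → V) :
    Finset (Finset V) :=
  (properCycles k G P).filter (fun S => ∀ i ≤ l, w i ∈ S)

/-- The neighbours of `v` in the part following that of `v`. -/
noncomputable def forwardNbrs (k : ℕ) (G : SimpleGraph V) (P : V → ℕ) (v : V) : Finset V :=
  univ.filter (fun u => G.Adj v u ∧ (P u : ZMod k) = P v + 1)

/-- The common neighbours of `x` and `y` in the part following that of `x`; used when `y` lies
two parts after `x`. -/
noncomputable def middleNbrs (k : ℕ) (G : SimpleGraph V) (P : V → ℕ) (x y : V) : Finset V :=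
  univ.filter (fun u => (P u : ZMod k) = P x + 1 ∧ G.Adj x u ∧ G.Adj u y)

/-- A set of `k` vertices formed by a forward path through `k - 1` parts and a common neighbour
of its ends in the missing part is a proper cycle. -/
theorem insert_mem_properCycles (hk : 3 ≤ k) (hP : ∀ v, P v < k) {j : ZMod k} {w : ℕ → V}
    (hw : IsForwardPath G P (k - 2) j w) {u : V}
    (hu : u ∈ middleNbrs k G P (w (k - 2)) (w 0)) :
    insert u ((range (k - 1)).image w) ∈ properCycles k G P := by
  simp only [middleNbrs, Finset.mem_filter, Finset.mem_univ, true_and] at hu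
  obtain ⟨hu1, hu2, hu3⟩ := hu
  rw [hw.1 _ le_rfl, sub_two_cast hk] at hu1
  rw [mem_properCycles_iff hP]
  have key : ∀ z : ZMod k, z = j + ((z - j).val : ZMod k) := by
    intro z; simp
  refine ⟨fun z => if (z - j).val < k - 1 then w (z - j).val else u, ?_, ?_, ?_⟩
  · intro v
    simp only [Finset.mem_insert, Finset.mem_image, Finset.mem_range]
    constructor
    · rintro (rfl | ⟨i, hi, rfl⟩)
      · refine ⟨j + (k - 1 : ℕ), ?_⟩
        rw [add_sub_cancel_left, ZMod.val_cast_of_lt (by omega)]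
        simp
      · refine ⟨j + i, ?_⟩
        rw [add_sub_cancel_left, ZMod.val_cast_of_lt (by omega)]
        simp [hi]
    · rintro ⟨z, rfl⟩
      by_cases h : (z - j).val < k - 1
      · right; exact ⟨_, h, by simp [h]⟩
      · left; simp [h]
  · intro z
    by_cases h : (z - j).val < k - 1
    · simp only [h, if_true]
      rw [hw.1 _ (by omega)]
      exact (key z).symm
    · simp only [h, if_false]
      have h1 : (z - j).val = k - 1 := by have := ZMod.val_lt (z - j); omega
      have h2 := key z
      rw [h1, sub_one_cast hk] at h2
      rw [hu1, h2]; ring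
  · intro z
    have h3 : z + 1 - j = (z - j) + 1 := by ring
    have hlt := ZMod.val_lt (z - j)
    simp only [h3, val_add_one_eq]
    by_cases h : (z - j).val < k - 1
    · rw [Nat.mod_eq_of_lt (by omega)]
      by_cases h4 : (z - j).val + 1 < k - 1
      · simp only [h, h4, if_true]
        exact hw.2 _ (by omega)
      · have h5 : (z - j).val = k - 2 := by omega
        rw [if_pos h, if_neg h4, h5]
        exact hu2
    · have h1 : (z - j).val + 1 = k := by omega
      have h6 : 0 < k - 1 := by omega
      simp only [h, if_false, h1, Nat.mod_self, h6, if_true]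
      exact hu3

/-- A proper cycle containing a forward path through `k - 1` parts arises from it by adding a
common neighbour of the two ends. -/
theorem exists_insert_eq (hk : 3 ≤ k) (hP : ∀ v, P v < k) {j : ZMod k} {w : ℕ → V}
    (hw : IsForwardPath G P (k - 2) j w) {S : Finset V} (hS : S ∈ properCycles k G P)
    (hwS : ∀ i ≤ k - 2, w i ∈ S) :
    ∃ u ∈ middleNbrs k G P (w (k - 2)) (w 0), insert u ((range (k - 1)).image w) = S := by
  rw [mem_properCycles_iff hP] at hS
  obtain ⟨W, h0, h1, h2⟩ := hS
  have hW : ∀ v ∈ S, W (P v) = v := by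
    intro v hv
    obtain ⟨z, rfl⟩ := (h0 v).1 hv
    rw [h1]
  have hwW : ∀ i ≤ k - 2, w i = W (j + i) := by
    intro i hi
    rw [← hw.1 i hi, hW _ (hwS i hi)]
  refine ⟨W (j - 1), ?_, ?_⟩
  · simp only [middleNbrs, Finset.mem_filter, Finset.mem_univ, true_and]
    rw [hw.1 _ le_rfl, hwW _ le_rfl, hwW 0 (by omega), sub_two_cast hk, h1]
    refine ⟨by ring, ?_, ?_⟩
    · convert h2 (j + -2) using 2
      ring
    · convert h2 (j - 1) using 2
      simp
  · ext v
    rw [h0]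
    simp only [Finset.mem_insert, Finset.mem_image, Finset.mem_range]
    constructor
    · rintro (rfl | ⟨i, hi, rfl⟩)
      · exact ⟨_, rfl⟩
      · exact ⟨_, (hwW i (by omega)).symm⟩
    · rintro ⟨z, rfl⟩
      have key : z = j + ((z - j).val : ZMod k) := by simp
      have hlt := ZMod.val_lt (z - j)
      by_cases h : (z - j).val < k - 1
      · right
        refine ⟨_, h, ?_⟩
        rw [hwW _ (by omega), ← key]
      · left
        have h1 : (z - j).val = k - 1 := by omega
        rw [h1, sub_one_cast hk] at key
        rw [key, sub_eq_add_neg]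

theorem card_extensions_last (hk : 3 ≤ k) (hP : ∀ v, P v < k) {j : ZMod k} {w : ℕ → V}
    (hw : IsForwardPath G P (k - 2) j w) :
    (extensions k G P (k - 2) w).card = (middleNbrs k G P (w (k - 2)) (w 0)).card := by
  have himg : extensions k G P (k - 2) w =
      (middleNbrs k G P (w (k - 2)) (w 0)).image
        (fun u => insert u ((range (k - 1)).image w)) := by
    ext S
    simp only [extensions, Finset.mem_filter, Finset.mem_image]
    constructor
    · rintro ⟨hS, hwS⟩
      exact exists_insert_eq hk hP hw hS hwS
    · rintro ⟨u, hu, rfl⟩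
      refine ⟨insert_mem_properCycles hk hP hw hu, fun i hi => ?_⟩
      exact Finset.mem_insert_of_mem
        (Finset.mem_image_of_mem _ (Finset.mem_range.2 (by omega)))
  rw [himg, Finset.card_image_of_injOn]
  intro u hu u' hu' h
  simp only [middleNbrs, Finset.coe_filter, Finset.mem_univ, true_and, Set.mem_ofPred_eq] at hu hu'
  have hmem : u ∈ insert u' ((range (k - 1)).image w) := by
    have h' : insert u ((range (k - 1)).image w) = insert u' ((range (k - 1)).image w) := h
    rw [← h']; exact Finset.mem_insert_self _ _
  rcases Finset.mem_insert.1 hmem with h | h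
  · exact h
  · exfalso
    obtain ⟨i, hi, rfl⟩ := Finset.mem_image.1 h
    rw [Finset.mem_range] at hi
    have h3 := hu.1
    rw [hw.1 _ le_rfl, hw.1 i (by omega), add_assoc] at h3
    have h4 := add_left_cancel h3
    have h5 : ((k - 2 : ℕ) : ZMod k) + 1 = ((k - 1 : ℕ) : ZMod k) := by
      rw [sub_two_cast hk, sub_one_cast hk]; ring
    rw [h5] at h4
    have := eq_of_cast_eq (by omega) (by omega) h4
    omega

/-- Proper cycles through a forward path, sorted by their vertex in the part following its end. -/
theorem card_extensions_succ (hP : ∀ v, P v < k) (w : ℕ → V) (l : ℕ) :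
    (extensions k G P l w).card =
      ∑ u ∈ forwardNbrs k G P (w l),
        (extensions k G P (l + 1) (Function.update w (l + 1) u)).card := by
  rw [← Finset.card_biUnion]
  · congr 1
    ext S
    simp only [extensions, Finset.mem_filter, Finset.mem_biUnion, forwardNbrs, Finset.mem_univ,
      true_and]
    constructor
    · rintro ⟨hS, hwS⟩
      have hS' := hS
      rw [mem_properCycles_iff hP] at hS
      obtain ⟨W, h0, h1, h2⟩ := hS
      obtain ⟨z, hz⟩ := (h0 _).1 (hwS l le_rfl)
      refine ⟨W (z + 1), ⟨?_, ?_⟩, hS', ?_⟩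
      · rw [← hz]; exact h2 z
      · rw [h1, ← hz, h1]
      · intro i hi
        by_cases h : i = l + 1
        · subst h
          rw [Function.update_self]
          exact (h0 _).2 ⟨_, rfl⟩
        · rw [Function.update_of_ne h]
          exact hwS i (by omega)
    · rintro ⟨u, hu, hS, h⟩
      refine ⟨hS, fun i hi => ?_⟩
      have := h i (by omega)
      rwa [Function.update_of_ne (by omega)] at this
  · -- A proper cycle has only one vertex in the part of the new endpoint.
    intro u hu u' hu' hne
    rw [Function.onFun, Finset.disjoint_left]
    intro S hS hS'
    apply hne
    simp only [extensions, Finset.mem_filter] at hS hS'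
    obtain ⟨W, h0, h1, h2⟩ := (mem_properCycles_iff hP).1 hS.1
    have m1 := hS.2 (l + 1) le_rfl
    have m2 := hS'.2 (l + 1) le_rfl
    rw [Function.update_self] at m1 m2
    obtain ⟨z, rfl⟩ := (h0 _).1 m1
    obtain ⟨z', rfl⟩ := (h0 _).1 m2
    simp only [forwardNbrs, Finset.coe_filter, Finset.mem_univ, true_and, Set.mem_ofPred_eq,
      h1] at hu hu'
    rw [hu.2, hu'.2]

/-- Two-sided bounds on forward degrees and on codegrees give two-sided bounds on the number of
proper cycles through a forward path, by adding its remaining vertices one at a time. -/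
theorem card_extensions_bounds (hk : 3 ≤ k) (hP : ∀ v, P v < k) {d D c C : ℝ}
    (hd : 0 ≤ d) (hc : 0 ≤ c) (hC : 0 ≤ C)
    (hdeg : ∀ v, d ≤ (forwardNbrs k G P v).card ∧ ((forwardNbrs k G P v).card : ℝ) ≤ D)
    (hcod : ∀ x y, (P y : ZMod k) = P x + 2 →
      c ≤ (middleNbrs k G P x y).card ∧ ((middleNbrs k G P x y).card : ℝ) ≤ C)
    (m : ℕ) : ∀ (l : ℕ) (j : ZMod k) (w : ℕ → V), l + m = k - 2 → IsForwardPath G P l j w →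
      d ^ m * c ≤ (extensions k G P l w).card ∧
        ((extensions k G P l w).card : ℝ) ≤ D ^ m * C := by
  induction m with
  | zero =>
    intro l j w hl hw
    obtain rfl : l = k - 2 := by omega
    rw [card_extensions_last hk hP hw]
    simp only [pow_zero, one_mul]
    apply hcod
    rw [hw.1 _ le_rfl, hw.1 _ (Nat.zero_le _), sub_two_cast hk]
    simp
  | succ m ih =>
    intro l j w hl hw
    have key : ∀ u ∈ forwardNbrs k G P (w l),
        IsForwardPath G P (l + 1) j (Function.update w (l + 1) u) := by
      intro u hu
      simp only [forwardNbrs, Finset.mem_filter, Finset.mem_univ, true_and] at hu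
      constructor
      · intro i hi
        by_cases h : i = l + 1
        · subst h
          rw [Function.update_self, hu.2, hw.1 _ le_rfl]
          push_cast; ring
        · rw [Function.update_of_ne h]
          exact hw.1 i (by omega)
      · intro i hi
        rw [Function.update_of_ne (show i ≠ l + 1 by omega)]
        by_cases h : i = l
        · subst h
          rw [Function.update_self]; exact hu.1
        · rw [Function.update_of_ne (by omega)]
          exact hw.2 i (by omega)
    have hb := fun u hu => ih (l + 1) j _ (by omega) (key u hu)
    rw [card_extensions_succ hP w l]
    push_cast
    obtain ⟨hd1, hd2⟩ := hdeg (w l)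
    have hD : 0 ≤ D := hd.trans (hd1.trans hd2)
    constructor
    · have h1 := Finset.card_nsmul_le_sum _ _ _ (fun u hu => (hb u hu).1)
      rw [nsmul_eq_mul] at h1
      refine le_trans ?_ h1
      rw [pow_succ', mul_assoc]
      exact mul_le_mul_of_nonneg_right hd1 (by positivity)
    · have h1 := Finset.sum_le_card_nsmul _ _ _ (fun u hu => (hb u hu).2)
      rw [nsmul_eq_mul] at h1
      refine h1.trans ?_
      rw [pow_succ', mul_assoc]
      by_cases he : (forwardNbrs k G P (w l)).Nonempty
      · obtain ⟨u, hu⟩ := he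
        have h0 : 0 ≤ D ^ m * C := (Nat.cast_nonneg _).trans (hb u hu).2
        exact mul_le_mul_of_nonneg_right hd2 h0
      · rw [Finset.not_nonempty_iff_eq_empty] at he
        simp only [he, Finset.card_empty, Nat.cast_zero, zero_mul] at hd1 ⊢
        positivity

/-! ### Counting in pseudorandom graphs -/

/-- The graph properties used in the counting: forward degrees and codegrees within a factor `4`
of `N p` and `N p ^ 2`, and, for every matching `M` of at most `n` pairs and every set `U` of at
most `k n` further vertices, at most `4 k n ^ 2 p ^ 2` incidences of a vertex of `U` with both
ends of a pair of `M`. -/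
structure IsPseudorandom (k N n : ℕ) (p : ℝ) (G : SimpleGraph V) (P : V → ℕ) : Prop where
  adj : ∀ u v, G.Adj u v → (P v : ZMod k) = P u + 1 ∨ (P u : ZMod k) = P v + 1
  deg : ∀ v, N * p / 4 ≤ (forwardNbrs k G P v).card ∧
    ((forwardNbrs k G P v).card : ℝ) ≤ 4 * (N * p)
  codeg : ∀ x y, (P y : ZMod k) = P x + 2 → N * p ^ 2 / 4 ≤ (middleNbrs k G P x y).card ∧
    ((middleNbrs k G P x y).card : ℝ) ≤ 4 * (N * p ^ 2)
  matching : ∀ (M : Finset (V × V)) (U : Finset V), M.card ≤ n → U.card ≤ k * n →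
    (∀ a ∈ M, ∀ b ∈ M, a.1 = b.1 → a = b) → (∀ a ∈ M, ∀ b ∈ M, a.2 = b.2 → a = b) →
    (∀ a ∈ M, ∀ b ∈ M, a.1 ≠ b.2) → (∀ a ∈ M, a.1 ∉ U ∧ a.2 ∉ U) →
    (((M ×ˢ U).filter (fun z => G.Adj z.1.1 z.2 ∧ G.Adj z.1.2 z.2)).card : ℝ) ≤
      4 * (k * n ^ 2 * p ^ 2)

/-- A single vertex is a forward path with `l = 0`, so `card_extensions_bounds` counts the proper
cycles through it. -/
theorem card_through_bounds (hk : 3 ≤ k) (hP : ∀ v, P v < k) {N n : ℕ} {p : ℝ} (hp : 0 ≤ p)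
    (hG : IsPseudorandom k N n p G P) (v : V) :
    (N * p / 4) ^ (k - 2) * (N * p ^ 2 / 4) ≤
        ((properCycles k G P).filter (fun S => v ∈ S)).card ∧
      (((properCycles k G P).filter (fun S => v ∈ S)).card : ℝ) ≤
        (4 * (N * p)) ^ (k - 2) * (4 * (N * p ^ 2)) := by
  have h := card_extensions_bounds hk hP (d := N * p / 4) (D := 4 * (N * p))
    (c := N * p ^ 2 / 4) (C := 4 * (N * p ^ 2)) (by positivity) (by positivity) (by positivity)
    hG.deg hG.codeg (k - 2) 0 (P v : ZMod k) (fun _ => v) (by omega)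
    ⟨by rintro i hi; obtain rfl : i = 0 := by omega
        simp, by intro i hi; omega⟩
  have he : extensions k G P 0 (fun _ => v) =
      (properCycles k G P).filter (fun S => v ∈ S) := by
    ext S
    simp only [extensions, Finset.mem_filter]
    exact and_congr_right fun _ => ⟨fun h => h 0 le_rfl, fun h _ _ => h⟩
  rwa [he] at h

/-- Every proper cycle has exactly one vertex in part `0`. -/
theorem tkCount_eq_sum (hP : ∀ v, P v < k) :
    tkCount k G P = ∑ v ∈ univ.filter (fun v => P v = 0),
      ((properCycles k G P).filter (fun S => v ∈ S)).card := by
  rw [tkCount, ← Finset.card_biUnion]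
  · congr 1
    ext S
    simp only [Finset.mem_filter, Finset.mem_biUnion, Finset.mem_univ, true_and]
    constructor
    · intro hS
      obtain ⟨W, h0, h1, h2⟩ := (mem_properCycles_iff hP).1 hS
      refine ⟨W 0, eq_of_cast_eq (hP _) (NeZero.pos k) ?_, hS, (h0 _).2 ⟨_, rfl⟩⟩
      rw [h1]; simp
    · rintro ⟨v, -, hS, -⟩
      exact hS
  · intro v hv v' hv' hne
    rw [Function.onFun, Finset.disjoint_left]
    intro S hS hS'
    apply hne
    rw [Finset.mem_filter] at hS hS'
    obtain ⟨W, h0, h1, h2⟩ := (mem_properCycles_iff hP).1 hS.1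
    obtain ⟨z, rfl⟩ := (h0 _).1 hS.2
    obtain ⟨z', rfl⟩ := (h0 _).1 hS'.2
    simp only [Finset.coe_filter, Finset.mem_univ, true_and, Set.mem_ofPred_eq] at hv hv'
    rw [← h1 z, ← h1 z', hv, hv']

theorem tkCount_bounds (hk : 3 ≤ k) (hP : ∀ v, P v < k) {N n : ℕ} {p : ℝ} (hp : 0 ≤ p)
    (hN : (univ.filter (fun v => P v = 0)).card = N) (hG : IsPseudorandom k N n p G P) :
    N * ((N * p / 4) ^ (k - 2) * (N * p ^ 2 / 4)) ≤ (tkCount k G P : ℝ) ∧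
      (tkCount k G P : ℝ) ≤ N * ((4 * (N * p)) ^ (k - 2) * (4 * (N * p ^ 2))) := by
  rw [tkCount_eq_sum hP, ← hN]
  push_cast
  rw [hN]
  have h1 := Finset.card_nsmul_le_sum (univ.filter (fun v => P v = 0)) _ _
    (fun v _ => (card_through_bounds hk hP hp hG v).1)
  have h2 := Finset.sum_le_card_nsmul (univ.filter (fun v => P v = 0)) _ _
    (fun v _ => (card_through_bounds hk hP hp hG v).2)
  rw [nsmul_eq_mul, hN] at h1 h2
  exact ⟨h1, h2⟩

theorem zCount_le (hk : 3 ≤ k) (hP : ∀ v, P v < k) {N n : ℕ} {p : ℝ} (hp : 0 ≤ p)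
    (hG : IsPseudorandom k N n p G P) (C' : Finset V) :
    (zCount k G P C' : ℝ) ≤ C'.card * ((4 * (N * p)) ^ (k - 2) * (4 * (N * p ^ 2))) := by
  have h1 : zCount k G P C' ≤
      ∑ v ∈ C', ((properCycles k G P).filter (fun S => v ∈ S)).card := by
    rw [zCount]
    refine le_trans (Finset.card_le_card ?_) Finset.card_biUnion_le
    intro S
    simp only [Finset.mem_filter, Finset.mem_biUnion]
    rintro ⟨hS, u, hu, hu'⟩
    exact ⟨u, hu', hS, hu⟩
  have h2 := Finset.sum_le_card_nsmul C' _ _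
    (fun v _ => (card_through_bounds hk hP hp hG v).2)
  rw [nsmul_eq_mul] at h2
  refine le_trans ?_ h2
  exact_mod_cast h1

/-- Distinct disjoint paths have disjoint sets of extensions, because two disjoint sets of
`k - 1 ≥ 2` vertices do not fit into a `k`-set. -/
theorem le_tBCount (hk : 3 ≤ k) (hP : ∀ v, P v < k) {N n : ℕ} {p : ℝ}
    (hG : IsPseudorandom k N n p G P) {𝓑 : Finset (Finset V)} (h𝓑 : IsGoodFamily k G P n 𝓑) :
    n * (N * p ^ 2 / 4) ≤ (tBCount k G P 𝓑 : ℝ) := by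
  obtain ⟨hcard, hpath, hdisj⟩ := h𝓑
  have hcov : tBCount k G P 𝓑 =
      ∑ B ∈ 𝓑, ((properCycles k G P).filter (fun S => B ⊆ S)).card := by
    rw [tBCount, ← Finset.card_biUnion]
    · congr 1
      ext S
      simp only [Finset.mem_filter, Finset.mem_biUnion]
      constructor
      · rintro ⟨hS, B, hB, hBS⟩
        exact ⟨B, hB, hS, hBS⟩
      · rintro ⟨B, hB, hS, hBS⟩
        exact ⟨hS, B, hB, hBS⟩
    · intro B hB B' hB' hne
      rw [Function.onFun, Finset.disjoint_left]
      intro S hS hS'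
      rw [Finset.mem_filter] at hS hS'
      have hd := hdisj B hB B' hB' hne
      have hc : ∀ B ∈ 𝓑, B.card = k - 1 := by
        intro B hB
        obtain ⟨w, rfl, hinj, -, -⟩ := hpath B hB
        rw [Finset.card_image_of_injOn, Finset.card_range]
        intro i hi i' hi' h
        by_contra hne
        simp only [Finset.coe_range, Set.mem_Iio] at hi hi'
        exact hinj i hi i' hi' hne h
      have h1 := Finset.card_le_card (Finset.union_subset hS.2 hS'.2)
      rw [Finset.card_union_of_disjoint hd, hc B hB, hc B' hB'] at h1
      have h2 : S.card ≤ k := by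
        have hS := hS.1
        rw [properCycles, Finset.mem_filter] at hS
        obtain ⟨w, rfl, -⟩ := hS.2
        exact Finset.card_image_le.trans (by simp)
      omega
  have hB : ∀ B ∈ 𝓑, N * p ^ 2 / 4 ≤
      (((properCycles k G P).filter (fun S => B ⊆ S)).card : ℝ) := by
    intro B hB
    obtain ⟨j, w, hw, rfl⟩ := exists_isForwardPath hk hP hG.adj (hpath B hB)
    have he : (properCycles k G P).filter (fun S => (range (k - 1)).image w ⊆ S) =
        extensions k G P (k - 2) w := by
      ext S
      simp only [extensions, Finset.mem_filter, Finset.image_subset_iff, Finset.mem_range]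
      exact and_congr_right fun _ => ⟨fun h i hi => h i (by omega), fun h i hi => h i (by omega)⟩
    rw [he, card_extensions_last hk hP hw]
    refine (hG.codeg _ _ ?_).1
    rw [hw.1 _ le_rfl, hw.1 _ (Nat.zero_le _), sub_two_cast hk]
    simp
  have h1 := Finset.card_nsmul_le_sum 𝓑 _ _ hB
  rw [nsmul_eq_mul, hcard] at h1
  rw [hcov]
  exact_mod_cast h1

/-- Sort the paths by their missing part. For a fixed missing part, the end pairs of the paths
form a matching avoiding that part, so `IsPseudorandom.matching` bounds the number of extensions
by vertices of `A ∪ ⋃ 𝓑`. -/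
theorem yCount_le [DecidableEq V] (hk : 3 ≤ k) (hP : ∀ v, P v < k) {N n : ℕ} {p : ℝ}
    (hG : IsPseudorandom k N n p G P) {𝓑 : Finset (Finset V)} (h𝓑 : IsGoodFamily k G P n 𝓑)
    {A : Finset V} (hA : A.card ≤ n) :
    (yCount k G P A 𝓑 : ℝ) ≤ k * (4 * (k * n ^ 2 * p ^ 2)) := by
  obtain rfl : ‹DecidableEq V› = fun a b => Classical.propDecidable (a = b) :=
    Subsingleton.elim _ _
  obtain ⟨hcard, hpath, hdisj⟩ := h𝓑
  have hV : Nonempty V ∨ IsEmpty V := (isEmpty_or_nonempty V).symm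
  rcases hV with hV | hV
  swap
  · have h0 : yCount k G P A 𝓑 = 0 := by
      rw [yCount, Finset.card_eq_zero, Finset.eq_empty_iff_forall_notMem]
      intro S hS
      obtain ⟨W, -⟩ := (mem_properCycles_iff hP).1 (Finset.mem_filter.1 hS).1
      exact hV.false (W 0)
    rw [h0, Nat.cast_zero]
    positivity
  have hex : ∀ B : Finset V, ∃ (j : ZMod k) (w : ℕ → V), B ∈ 𝓑 →
      IsForwardPath G P (k - 2) j w ∧ B = (range (k - 1)).image w := by
    intro B
    by_cases hB : B ∈ 𝓑
    · obtain ⟨j, w, h⟩ := exists_isForwardPath hk hP hG.adj (hpath B hB)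
      exact ⟨j, w, fun _ => h⟩
    · exact ⟨0, fun _ => hV.some, fun h => absurd h hB⟩
  choose j w hjw using hex
  have hmem : ∀ B ∈ 𝓑, ∀ i ≤ k - 2, w B i ∈ B := by
    intro B hB i hi
    have h : w B i ∈ (range (k - 1)).image (w B) :=
      Finset.mem_image_of_mem _ (Finset.mem_range.2 (by omega))
    rwa [← (hjw B hB).2] at h
  have huniq : ∀ B ∈ 𝓑, ∀ B' ∈ 𝓑, ∀ v, v ∈ B → v ∈ B' → B = B' := by
    intro B hB B' hB' v hv hv'
    by_contra hne
    exact Finset.disjoint_left.1 (hdisj B hB B' hB' hne) hv hv'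
  set X : Finset V := A ∪ 𝓑.biUnion id with hX
  have hXcard : X.card ≤ k * n := by
    have h1 : (𝓑.biUnion id).card ≤ 𝓑.card * (k - 1) := by
      refine Finset.card_biUnion_le_card_mul _ _ _ ?_
      intro B hB
      have : B.card ≤ k - 1 := by
        rw [(hjw B hB).2]
        exact Finset.card_image_le.trans (by simp)
      exact this
    have h2 := Finset.card_union_le A (𝓑.biUnion id)
    obtain ⟨m, rfl⟩ : ∃ m, k = m + 1 := ⟨k - 1, by omega⟩
    rw [hcard] at h1
    simp only [Nat.add_sub_cancel] at h1
    calc X.card ≤ n + n * m := by rw [hX]; omega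
      _ = (m + 1) * n := by ring
  set F : ZMod k → Finset (Finset V × V) := fun i =>
    ((𝓑.filter (fun B => j B = i)) ×ˢ (X.filter (fun u => (P u : ZMod k) = i - 1))).filter
      (fun z => G.Adj (w z.1 (k - 2)) z.2 ∧ G.Adj (w z.1 0) z.2) with hF
  have hcover : yCount k G P A 𝓑 ≤ ∑ i : ZMod k, (F i).card := by
    have hsub : (properCycles k G P).filter
        (fun S => ∃ B ∈ 𝓑, B ⊆ S ∧ ∃ u ∈ S \ B, u ∈ A ∪ 𝓑.biUnion id) ⊆
        (univ : Finset (ZMod k)).biUnion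
          (fun i => (F i).image (fun z => insert z.2 z.1)) := by
      intro S hS
      rw [Finset.mem_filter] at hS
      obtain ⟨hS, B, hB, hBS, u, hu, huX⟩ := hS
      obtain ⟨hw, hBw⟩ := hjw B hB
      obtain ⟨u', hu', hins⟩ := exists_insert_eq hk hP hw hS
        (fun i hi => hBS (hmem B hB i hi))
      rw [← hBw] at hins
      rw [Finset.mem_sdiff] at hu
      have huu : u = u' := by
        have h := hu.1
        rw [← hins, Finset.mem_insert] at h
        exact h.resolve_right hu.2
      subst huu
      simp only [middleNbrs, Finset.mem_filter, Finset.mem_univ, true_and] at hu'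
      rw [hw.1 _ le_rfl, sub_two_cast hk] at hu'
      simp only [Finset.mem_biUnion, Finset.mem_univ, true_and, Finset.mem_image]
      refine ⟨j B, (B, u), ?_, ?_⟩
      · simp only [hF, Finset.mem_filter, Finset.mem_product]
        refine ⟨⟨⟨hB, trivial⟩, huX, ?_⟩, hu'.2.1, hu'.2.2.symm⟩
        rw [hu'.1]; ring
      · simp only
        rw [← hins]
    rw [yCount]
    refine (Finset.card_le_card hsub).trans (Finset.card_biUnion_le.trans ?_)
    exact Finset.sum_le_sum fun i _ => Finset.card_image_le
  have hFi : ∀ i, ((F i).card : ℝ) ≤ 4 * (k * n ^ 2 * p ^ 2) := by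
    intro i
    set M : Finset (V × V) := (𝓑.filter (fun B => j B = i)).image
      (fun B => (w B (k - 2), w B 0)) with hM
    set U := X.filter (fun u => (P u : ZMod k) = i - 1) with hU
    have hMmem : ∀ a ∈ M, ∃ B ∈ 𝓑, j B = i ∧ a = (w B (k - 2), w B 0) := by
      intro a ha
      obtain ⟨B, hB, rfl⟩ := Finset.mem_image.1 ha
      rw [Finset.mem_filter] at hB
      exact ⟨B, hB.1, hB.2, rfl⟩
    have hP1 : ∀ a ∈ M, (P a.1 : ZMod k) = i - 2 ∧ (P a.2 : ZMod k) = i := by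
      intro a ha
      obtain ⟨B, hB, hj, rfl⟩ := hMmem a ha
      have hw := (hjw B hB).1
      simp only [hw.1 _ le_rfl, hw.1 _ (Nat.zero_le _), sub_two_cast hk, hj]
      constructor
      · ring
      · simp
    have hle := hG.matching M U
      (Finset.card_image_le.trans ((Finset.card_filter_le _ _).trans hcard.le))
      ((Finset.card_filter_le _ _).trans hXcard) ?_ ?_ ?_ ?_
    · refine le_trans ?_ hle
      rw [Nat.cast_le]
      refine Finset.card_le_card_of_injOn
        (fun z => ((w z.1 (k - 2), w z.1 0), z.2)) ?_ ?_
      · intro z hz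
        simp only [hF, Finset.coe_filter, Finset.mem_product, Set.mem_ofPred_eq,
          Finset.mem_filter] at hz
        simp only [Finset.coe_filter, Finset.mem_product, Set.mem_ofPred_eq]
        refine ⟨⟨?_, ?_⟩, hz.2⟩
        · exact Finset.mem_image_of_mem _ (Finset.mem_filter.2 hz.1.1)
        · exact Finset.mem_filter.2 hz.1.2
      · intro z hz z' hz' h
        simp only [hF, Finset.coe_filter, Finset.mem_product, Set.mem_ofPred_eq,
          Finset.mem_filter] at hz hz'
        simp only [Prod.mk.injEq] at h
        refine Prod.ext ?_ h.2
        refine huniq _ hz.1.1.1 _ hz'.1.1.1 _ (hmem _ hz.1.1.1 0 (Nat.zero_le _)) ?_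
        rw [h.1.2]
        exact hmem _ hz'.1.1.1 0 (Nat.zero_le _)
    · intro a ha b hb h
      obtain ⟨B, hB, -, rfl⟩ := hMmem a ha
      obtain ⟨B', hB', -, rfl⟩ := hMmem b hb
      rw [huniq B hB B' hB' _ (hmem B hB (k - 2) le_rfl)
        (by simp only at h; rw [h]; exact hmem B' hB' (k - 2) le_rfl)]
    · intro a ha b hb h
      obtain ⟨B, hB, -, rfl⟩ := hMmem a ha
      obtain ⟨B', hB', -, rfl⟩ := hMmem b hb
      rw [huniq B hB B' hB' _ (hmem B hB 0 (Nat.zero_le _))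
        (by simp only at h; rw [h]; exact hmem B' hB' 0 (Nat.zero_le _))]
    · intro a ha b hb h
      have h1 := (hP1 a ha).1
      rw [h, (hP1 b hb).2] at h1
      exact two_ne_zero_zmod hk (by linear_combination h1)
    · intro a ha
      constructor
      · intro h
        have h2 := (Finset.mem_filter.1 h).2
        rw [(hP1 a ha).1] at h2
        exact one_ne_zero_zmod hk (by linear_combination -h2)
      · intro h
        have h2 := (Finset.mem_filter.1 h).2
        rw [(hP1 a ha).2] at h2
        exact one_ne_zero_zmod hk (by linear_combination h2)
  have hsum : (∑ i : ZMod k, ((F i).card : ℝ)) ≤ k * (4 * (k * n ^ 2 * p ^ 2)) := by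
    have h := Finset.sum_le_card_nsmul (univ : Finset (ZMod k)) _ _ (fun i _ => hFi i)
    rwa [nsmul_eq_mul, Finset.card_univ, ZMod.card] at h
  refine le_trans ?_ hsum
  exact_mod_cast hcover

end Deterministic

/-! ### Tail bounds for disjoint blocks -/

section Probability

variable {E ι α : Type*} [Fintype E] [DecidableEq E] [Fintype α]

theorem card_filter_forall_eq (a₀ : α) (T : Finset E) :
    ((univ.filter (fun ω : E → α => ∀ e ∈ T, ω e = a₀)).card : ℝ) =
      Fintype.card (E → α) * (1 / (Fintype.card α : ℝ)) ^ T.card := by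
  have hα : (Fintype.card α : ℝ) ≠ 0 := by
    have : 0 < Fintype.card α := Fintype.card_pos_iff.2 ⟨a₀⟩
    positivity
  have h1 : univ.filter (fun ω : E → α => ∀ e ∈ T, ω e = a₀) =
      Fintype.piFinset (fun e => if e ∈ T then {a₀} else univ) := by
    ext ω
    simp only [Finset.mem_filter, Finset.mem_univ, true_and, Fintype.mem_piFinset]
    refine forall_congr' fun e => ?_
    by_cases h : e ∈ T <;> simp [h]
  rw [h1, Fintype.card_piFinset, Fintype.card_fun]
  have h2 : ∀ e : E, ((if e ∈ T then {a₀} else univ : Finset α).card : ℝ) =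
      Fintype.card α * (if e ∈ T then 1 / (Fintype.card α : ℝ) else 1) := by
    intro e
    by_cases h : e ∈ T
    · simp [h, hα]
    · simp [h]
  push_cast
  rw [Finset.prod_congr rfl fun e _ => h2 e, Finset.prod_mul_distrib, Finset.prod_const,
    Finset.card_univ, Finset.prod_ite, Finset.prod_const, Finset.prod_const_one, mul_one]
  congr 3
  ext e
  simp

/-- The moment generating function of the number of fully selected blocks among disjoint blocks
of equal size `s`, evaluated by expanding the product. -/
theorem sum_prod_blocks (a₀ : α) (J : Finset ι) (S : ι → Finset E) (s : ℕ) (c : ℝ)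
    (hdisj : ∀ i ∈ J, ∀ j ∈ J, i ≠ j → Disjoint (S i) (S j)) (hs : ∀ i ∈ J, (S i).card = s) :
    ∑ ω : E → α, ∏ i ∈ J, (1 + if ∀ e ∈ S i, ω e = a₀ then c else 0) =
      Fintype.card (E → α) * (1 + c * (1 / (Fintype.card α : ℝ)) ^ s) ^ J.card := by
  rw [← Finset.prod_const, Finset.prod_one_add]
  simp only [Finset.prod_one_add]
  rw [Finset.sum_comm, Finset.mul_sum]
  refine Finset.sum_congr rfl fun t ht => ?_
  rw [Finset.mem_powerset] at ht
  have h1 : ∀ ω : E → α, (∏ i ∈ t, if ∀ e ∈ S i, ω e = a₀ then c else 0) =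
      c ^ t.card * if (∀ e ∈ t.biUnion S, ω e = a₀) then 1 else 0 := by
    intro ω
    by_cases h : ∀ e ∈ t.biUnion S, ω e = a₀
    · rw [if_pos h, mul_one, ← Finset.prod_const]
      refine Finset.prod_congr rfl fun i hi => if_pos fun e he => h e ?_
      exact Finset.mem_biUnion.2 ⟨i, hi, he⟩
    · rw [if_neg h, mul_zero]
      push Not at h
      obtain ⟨e, he, hne⟩ := h
      obtain ⟨i, hi, hei⟩ := Finset.mem_biUnion.1 he
      exact Finset.prod_eq_zero hi (if_neg fun h => hne (h e hei))
  have h2 : (t.biUnion S).card = s * t.card := by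
    rw [Finset.card_biUnion fun i hi j hj hij => hdisj i (ht hi) j (ht hj) hij,
      Finset.sum_congr rfl fun i hi => hs i (ht hi), Finset.sum_const, smul_eq_mul, mul_comm]
  rw [Finset.sum_congr rfl fun ω _ => h1 ω, ← Finset.mul_sum, Finset.sum_boole,
    card_filter_forall_eq, h2, Finset.prod_const, mul_pow, pow_mul]
  ring

/-- The number of blocks `S i`, `i ∈ J`, on which `ω` is constantly `a₀`. -/
noncomputable def blockCount {E ι α : Type*} (a₀ : α) (J : Finset ι) (S : ι → Finset E)
    (ω : E → α) : ℕ :=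
  (J.filter (fun i => ∀ e ∈ S i, ω e = a₀)).card

theorem le_blockCount {E ι α : Type*} {a₀ : α} {J T : Finset ι} {S : ι → Finset E} {ω : E → α}
    (hT : T ⊆ J) (h : ∀ i ∈ T, ∀ e ∈ S i, ω e = a₀) : T.card ≤ blockCount a₀ J S ω :=
  Finset.card_le_card fun i hi => Finset.mem_filter.2 ⟨hT hi, h i hi⟩

theorem sum_exp_blockCount (a₀ : α) (J : Finset ι) (S : ι → Finset E) (s : ℕ) (t : ℝ)
    (hdisj : ∀ i ∈ J, ∀ j ∈ J, i ≠ j → Disjoint (S i) (S j)) (hs : ∀ i ∈ J, (S i).card = s) :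
    ∑ ω : E → α, Real.exp (t * blockCount a₀ J S ω) =
      Fintype.card (E → α) *
        (1 + (Real.exp t - 1) * (1 / (Fintype.card α : ℝ)) ^ s) ^ J.card := by
  rw [← sum_prod_blocks a₀ J S s _ hdisj hs]
  refine Finset.sum_congr rfl fun ω _ => ?_
  have : ∀ i ∈ J, (1 + if ∀ e ∈ S i, ω e = a₀ then Real.exp t - 1 else 0) =
      if ∀ e ∈ S i, ω e = a₀ then Real.exp t else 1 := by
    intro i _
    split_ifs <;> ring
  rw [Finset.prod_congr rfl this, Finset.prod_ite, Finset.prod_const, Finset.prod_const_one,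
    mul_one, ← Real.exp_nat_mul, blockCount, mul_comm]
  congr!

theorem sum_exp_blockCount_le (a₀ : α) (J : Finset ι) (S : ι → Finset E) (s : ℕ) (t : ℝ)
    (hdisj : ∀ i ∈ J, ∀ j ∈ J, i ≠ j → Disjoint (S i) (S j)) (hs : ∀ i ∈ J, (S i).card = s) :
    ∑ ω : E → α, Real.exp (t * blockCount a₀ J S ω) ≤
      Fintype.card (E → α) *
        Real.exp ((Real.exp t - 1) * (J.card * (1 / (Fintype.card α : ℝ)) ^ s)) := by
  rw [sum_exp_blockCount a₀ J S s t hdisj hs]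
  refine mul_le_mul_of_nonneg_left ?_ (Nat.cast_nonneg _)
  rw [show (Real.exp t - 1) * (J.card * (1 / (Fintype.card α : ℝ)) ^ s) =
    J.card * ((Real.exp t - 1) * (1 / (Fintype.card α : ℝ)) ^ s) by ring, Real.exp_nat_mul]
  have hq : 0 ≤ (1 / (Fintype.card α : ℝ)) ^ s ∧ (1 / (Fintype.card α : ℝ)) ^ s ≤ 1 := by
    have h1 : (1 : ℝ) ≤ Fintype.card α := by
      exact_mod_cast Fintype.card_pos_iff.2 ⟨a₀⟩
    refine ⟨by positivity, pow_le_one₀ (by positivity) ?_⟩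
    rw [div_le_one (by positivity)]
    exact h1
  refine pow_le_pow_left₀ ?_ ?_ _
  · have := Real.exp_pos t
    nlinarith
  · rw [add_comm]
    exact Real.add_one_le_exp _

/-- Markov's inequality for a counting measure, in exponential form. -/
theorem card_mul_exp_le {Ω : Type*} [Fintype Ω] (A : Ω → Prop) (f : Ω → ℝ) (a : ℝ)
    (h : ∀ ω, A ω → a ≤ f ω) :
    ((univ.filter A).card : ℝ) * Real.exp a ≤ ∑ ω, Real.exp (f ω) := by
  rw [← nsmul_eq_mul]
  refine (Finset.card_nsmul_le_sum _ (fun ω => Real.exp (f ω)) _ ?_).trans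
    (Finset.sum_le_univ_sum_of_nonneg fun ω => (Real.exp_pos _).le)
  intro ω hω
  exact Real.exp_le_exp.2 (h ω (Finset.mem_filter.1 hω).2)

/-- Chernoff bound above the mean: `e ^ t - 1 < 2` at `t = 1`, so exceeding `4 μ` costs
`e ^ (2 μ - 4 μ)`. -/
theorem card_upper_tail (a₀ : α) (J : Finset ι) (S : ι → Finset E) (s : ℕ) (μ : ℝ)
    (hdisj : ∀ i ∈ J, ∀ j ∈ J, i ≠ j → Disjoint (S i) (S j)) (hs : ∀ i ∈ J, (S i).card = s)
    (hμ : J.card * (1 / (Fintype.card α : ℝ)) ^ s ≤ μ) :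
    ((univ.filter (fun ω : E → α => 4 * μ < blockCount a₀ J S ω)).card : ℝ) ≤
      Fintype.card (E → α) * Real.exp (-(2 * μ)) := by
  have h1 := card_mul_exp_le (fun ω : E → α => 4 * μ < blockCount a₀ J S ω)
    (fun ω => 1 * blockCount a₀ J S ω) (4 * μ) (fun ω h => by simpa using h.le)
  have h2 := h1.trans (sum_exp_blockCount_le a₀ J S s 1 hdisj hs)
  rw [← le_div_iff₀ (Real.exp_pos _), mul_div_assoc, ← Real.exp_sub] at h2
  refine h2.trans (mul_le_mul_of_nonneg_left (Real.exp_le_exp.2 ?_) (Nat.cast_nonneg _))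
  have h3 := Real.exp_one_lt_d9
  have h4 : (0 : ℝ) ≤ J.card * (1 / (Fintype.card α : ℝ)) ^ s := by positivity
  nlinarith

/-- Chernoff bound below the mean: `e ^ t - 1 ≤ -1 / 2` at `t = -1`, so falling below `μ / 4`
costs `e ^ (μ / 4 - μ / 2)`. -/
theorem card_lower_tail (a₀ : α) (J : Finset ι) (S : ι → Finset E) (s : ℕ) (μ : ℝ)
    (hdisj : ∀ i ∈ J, ∀ j ∈ J, i ≠ j → Disjoint (S i) (S j)) (hs : ∀ i ∈ J, (S i).card = s)
    (hμ : J.card * (1 / (Fintype.card α : ℝ)) ^ s = μ) :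
    ((univ.filter (fun ω : E → α => (blockCount a₀ J S ω : ℝ) < μ / 4)).card : ℝ) ≤
      Fintype.card (E → α) * Real.exp (-(μ / 4)) := by
  have h1 := card_mul_exp_le (fun ω : E → α => (blockCount a₀ J S ω : ℝ) < μ / 4)
    (fun ω => -1 * blockCount a₀ J S ω) (-(μ / 4)) (fun ω h => by linarith)
  have h2 := h1.trans (sum_exp_blockCount_le a₀ J S s (-1) hdisj hs)
  rw [← le_div_iff₀ (Real.exp_pos _), mul_div_assoc, ← Real.exp_sub, hμ] at h2
  refine h2.trans (mul_le_mul_of_nonneg_left (Real.exp_le_exp.2 ?_) (Nat.cast_nonneg _))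
  have h3 : Real.exp (-1) ≤ 1 / 2 := by
    have := Real.exp_one_gt_d9
    rw [Real.exp_neg, inv_eq_one_div]
    exact one_div_le_one_div_of_le (by norm_num) (by linarith)
  have h4 : (0 : ℝ) ≤ μ := by rw [← hμ]; positivity
  nlinarith

/-- Sets with at least one and at most `n` elements are images of `n`-tuples. -/
theorem card_small_sets_le {W : Type*} [Fintype W] (n : ℕ) :
    (univ.filter (fun M : Finset W => M.Nonempty ∧ M.card ≤ n)).card ≤ Fintype.card W ^ n := by
  have h : univ.filter (fun M : Finset W => M.Nonempty ∧ M.card ≤ n) ⊆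
      (univ : Finset (Fin n → W)).image (fun f => univ.image f) := by
    intro M hM
    obtain ⟨⟨x₀, hx₀⟩, hc⟩ := (Finset.mem_filter.1 hM).2
    refine Finset.mem_image.2
      ⟨fun i => if h : (i : ℕ) < M.card then (M.equivFin.symm ⟨i, h⟩ : W) else x₀,
        Finset.mem_univ _, ?_⟩
    ext x
    simp only [Finset.mem_image, Finset.mem_univ, true_and]
    constructor
    · rintro ⟨i, rfl⟩
      split_ifs
      · exact Subtype.prop _
      · exact hx₀
    · intro hx
      have hlt := (M.equivFin ⟨x, hx⟩).2
      refine ⟨⟨M.equivFin ⟨x, hx⟩, by omega⟩, ?_⟩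
      simp
  refine (Finset.card_le_card h).trans (Finset.card_image_le.trans ?_)
  simp

theorem card_biUnion_le_real {β Ω : Type*} [DecidableEq Ω] (I : Finset β) (bad : β → Finset Ω)
    (ε : ℝ) (h : ∀ i ∈ I, ((bad i).card : ℝ) ≤ ε) :
    ((I.biUnion bad).card : ℝ) ≤ I.card * ε := by
  have h1 : ((I.biUnion bad).card : ℝ) ≤ ∑ i ∈ I, ((bad i).card : ℝ) := by
    exact_mod_cast Finset.card_biUnion_le
  refine h1.trans ?_
  rw [← nsmul_eq_mul]
  exact Finset.sum_le_card_nsmul _ _ _ h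

end Probability

/-! ### Random subgraphs of a blow-up of a cycle -/

section RandomGraph

variable {V α : Type*} [Fintype V] [Fintype α] {k : ℕ} {P : V → ℕ}

/-- The graph whose edges are the pairs in consecutive parts to which `ω` assigns the value
`a₀`. For uniformly random `ω`, each such pair is an edge independently with probability
`1 / |α|`. -/
def selectedGraph {V α : Type*} (k : ℕ) (P : V → ℕ) (a₀ : α) (ω : Sym2 V → α) :
    SimpleGraph V where
  Adj u v := u ≠ v ∧ ((P v : ZMod k) = P u + 1 ∨ (P u : ZMod k) = P v + 1) ∧ ω s(u, v) = a₀
  symm := ⟨fun u v h => ⟨h.1.symm, h.2.1.symm, by rw [Sym2.eq_swap]; exact h.2.2⟩⟩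
  loopless := ⟨fun u h => h.1 rfl⟩

theorem adj_selectedGraph_of_forward {V α : Type*} {k : ℕ} {P : V → ℕ} (hk : 3 ≤ k) {a₀ : α}
    {ω : Sym2 V → α} {u v : V} (h : (P v : ZMod k) = P u + 1) :
    (selectedGraph k P a₀ ω).Adj u v ↔ ω s(u, v) = a₀ := by
  refine ⟨fun h => h.2.2, fun h' => ⟨?_, Or.inl h, h'⟩⟩
  rintro rfl
  exact one_ne_zero_zmod hk (by linear_combination -h)

/-- The two pairs joining `u` to `x` and `y`. -/
noncomputable def cherry {V : Type*} (x y u : V) : Finset (Sym2 V) := {s(x, u), s(y, u)}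

theorem card_cherry {V : Type*} {x y u : V} (hxy : x ≠ y) : (cherry x y u).card = 2 := by
  rw [cherry, Finset.card_pair]
  intro h
  rw [Sym2.eq_iff] at h
  rcases h with h | h
  · exact hxy h.1
  · exact hxy (h.1.trans h.2)

theorem disjoint_cherry {V : Type*} {x y u x' y' u' : V} (h1 : u = u' → x ≠ x')
    (h2 : u = u' → y ≠ y') (h3 : x ≠ y') (h4 : y ≠ x') (h5 : x ≠ u') (h6 : y ≠ u') :
    Disjoint (cherry x y u) (cherry x' y' u') := by
  rw [Finset.disjoint_left]
  intro e he he'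
  simp only [cherry, Finset.mem_insert, Finset.mem_singleton] at he he'
  rcases he with rfl | rfl <;> rcases he' with h | h <;> rw [Sym2.eq_iff] at h <;> tauto

theorem card_bad_deg (hk : 3 ≤ k) {N : ℕ}
    (hN : ∀ z : ZMod k, (univ.filter (fun v => (P v : ZMod k) = z)).card = N) (a₀ : α) (v : V)
    {p : ℝ} (hp : p = 1 / (Fintype.card α : ℝ)) :
    ((univ.filter (fun ω : Sym2 V → α =>
      ((forwardNbrs k (selectedGraph k P a₀ ω) P v).card : ℝ) < N * p / 4 ∨
      4 * (N * p) < (forwardNbrs k (selectedGraph k P a₀ ω) P v).card)).card : ℝ) ≤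
      Fintype.card (Sym2 V → α) * (2 * Real.exp (-(N * p / 4))) := by
  set J : Finset V := univ.filter (fun u => (P u : ZMod k) = P v + 1) with hJ
  set S : V → Finset (Sym2 V) := fun u => {s(v, u)} with hS
  have hX : ∀ ω, (forwardNbrs k (selectedGraph k P a₀ ω) P v).card = blockCount a₀ J S ω := by
    intro ω
    rw [blockCount]
    congr 1
    ext u
    simp only [forwardNbrs, hJ, hS, Finset.mem_filter, Finset.mem_univ, true_and,
      Finset.mem_singleton, forall_eq]
    rw [and_comm]
    exact and_congr_right fun h => adj_selectedGraph_of_forward hk h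
  have hdisj : ∀ i ∈ J, ∀ j ∈ J, i ≠ j → Disjoint (S i) (S j) := by
    intro i _ j _ hij
    simp only [hS, Finset.disjoint_singleton]
    intro h
    exact hij (Sym2.congr_right.1 h)
  have hs : ∀ i ∈ J, (S i).card = 1 := fun i _ => Finset.card_singleton _
  have hμ : J.card * (1 / (Fintype.card α : ℝ)) ^ 1 = N * p := by
    rw [hJ, hN, pow_one, hp]
  simp only [hX]
  rw [Finset.filter_or]
  have h1 := card_lower_tail a₀ J S 1 (N * p) hdisj hs hμ
  have h2 := card_upper_tail a₀ J S 1 (N * p) hdisj hs hμ.le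
  have h3 : Real.exp (-(2 * (N * p))) ≤ Real.exp (-(N * p / 4)) := by
    have : 0 ≤ N * p := by rw [hp]; positivity
    exact Real.exp_le_exp.2 (by linarith)
  have h4 : (0 : ℝ) ≤ Fintype.card (Sym2 V → α) := Nat.cast_nonneg _
  refine (Nat.cast_le.2 (Finset.card_union_le _ _)).trans ?_
  push_cast
  nlinarith

theorem card_bad_codeg (hk : 3 ≤ k) {N : ℕ}
    (hN : ∀ z : ZMod k, (univ.filter (fun v => (P v : ZMod k) = z)).card = N) (a₀ : α)
    {x y : V} (hxy : (P y : ZMod k) = P x + 2) {p : ℝ} (hp : p = 1 / (Fintype.card α : ℝ)) :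
    ((univ.filter (fun ω : Sym2 V → α =>
      ((middleNbrs k (selectedGraph k P a₀ ω) P x y).card : ℝ) < N * p ^ 2 / 4 ∨
      4 * (N * p ^ 2) < (middleNbrs k (selectedGraph k P a₀ ω) P x y).card)).card : ℝ) ≤
      Fintype.card (Sym2 V → α) * (2 * Real.exp (-(N * p ^ 2 / 4))) := by
  set J : Finset V := univ.filter (fun u => (P u : ZMod k) = P x + 1) with hJ
  have hJm : ∀ u ∈ J, (P u : ZMod k) = P x + 1 := fun u hu => (Finset.mem_filter.1 hu).2
  have hX : ∀ ω, (middleNbrs k (selectedGraph k P a₀ ω) P x y).card =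
      blockCount a₀ J (cherry x y) ω := by
    intro ω
    rw [blockCount]
    congr 1
    ext u
    simp only [middleNbrs, hJ, cherry, Finset.mem_filter, Finset.mem_univ, true_and,
      Finset.mem_insert, Finset.mem_singleton, forall_eq_or_imp, forall_eq]
    refine and_congr_right fun h => ?_
    rw [adj_selectedGraph_of_forward hk h,
      adj_selectedGraph_of_forward hk (show (P y : ZMod k) = P u + 1 by rw [h, hxy]; ring),
      Sym2.eq_swap (a := u)]
  have hne : x ≠ y := by
    rintro rfl
    exact two_ne_zero_zmod hk (by linear_combination -hxy)
  have hxJ : ∀ u ∈ J, x ≠ u := by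
    rintro u hu rfl
    exact one_ne_zero_zmod hk (by linear_combination -(hJm _ hu))
  have hyJ : ∀ u ∈ J, y ≠ u := by
    rintro u hu rfl
    exact one_ne_zero_zmod hk (by linear_combination hJm _ hu - hxy)
  have hdisj : ∀ i ∈ J, ∀ j ∈ J, i ≠ j → Disjoint (cherry x y i) (cherry x y j) := by
    intro i _ j hj hij
    exact disjoint_cherry (fun h => absurd h hij) (fun h => absurd h hij) hne hne.symm
      (hxJ j hj) (hyJ j hj)
  have hs : ∀ i ∈ J, (cherry x y i).card = 2 := fun i _ => card_cherry hne
  have hμ : J.card * (1 / (Fintype.card α : ℝ)) ^ 2 = N * p ^ 2 := by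
    rw [hJ, hN, hp]
  simp only [hX]
  rw [Finset.filter_or]
  have h1 := card_lower_tail a₀ J _ 2 (N * p ^ 2) hdisj hs hμ
  have h2 := card_upper_tail a₀ J _ 2 (N * p ^ 2) hdisj hs hμ.le
  have h3 : Real.exp (-(2 * (N * p ^ 2))) ≤ Real.exp (-(N * p ^ 2 / 4)) := by
    have : 0 ≤ N * p ^ 2 := by positivity
    exact Real.exp_le_exp.2 (by linarith)
  have h4 : (0 : ℝ) ≤ Fintype.card (Sym2 V → α) := Nat.cast_nonneg _
  refine (Nat.cast_le.2 (Finset.card_union_le _ _)).trans ?_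
  push_cast
  nlinarith

/-- `M` consists of pairwise disjoint pairs of distinct vertices, none of them in `U`. -/
def IsMatchingOff {V : Type*} (M : Finset (V × V)) (U : Finset V) : Prop :=
  (∀ a ∈ M, ∀ b ∈ M, a.1 = b.1 → a = b) ∧ (∀ a ∈ M, ∀ b ∈ M, a.2 = b.2 → a = b) ∧
    (∀ a ∈ M, ∀ b ∈ M, a.1 ≠ b.2) ∧ ∀ a ∈ M, a.1 ∉ U ∧ a.2 ∉ U

/-- Disjointness of the pairs in `M`, and of `U` from them, makes the cherries with ends in `M` and
centre in `U` pairwise edge-disjoint, so the upper tail bound applies. -/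
theorem card_bad_matching {n : ℕ} (a₀ : α) {M : Finset (V × V)} {U : Finset V}
    (hM : M.card ≤ n) (hU : U.card ≤ k * n) (hMU : IsMatchingOff M U) {p : ℝ}
    (hp : p = 1 / (Fintype.card α : ℝ)) :
    ((univ.filter (fun ω : Sym2 V → α => 4 * (k * n ^ 2 * p ^ 2) <
      (((M ×ˢ U).filter (fun z => (selectedGraph k P a₀ ω).Adj z.1.1 z.2 ∧
        (selectedGraph k P a₀ ω).Adj z.1.2 z.2)).card : ℝ))).card : ℝ) ≤
      Fintype.card (Sym2 V → α) * Real.exp (-(2 * (k * n ^ 2 * p ^ 2))) := by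
  obtain ⟨g1, g2, g3, g4⟩ := hMU
  set S : (V × V) × V → Finset (Sym2 V) := fun z => cherry z.1.1 z.1.2 z.2 with hS
  have hdisj : ∀ i ∈ M ×ˢ U, ∀ j ∈ M ×ˢ U, i ≠ j → Disjoint (S i) (S j) := by
    intro i hi j hj hij
    rw [Finset.mem_product] at hi hj
    refine disjoint_cherry ?_ ?_ (g3 _ hi.1 _ hj.1) (g3 _ hj.1 _ hi.1).symm ?_ ?_
    · exact fun h h' => hij (Prod.ext (g1 _ hi.1 _ hj.1 h') h)
    · exact fun h h' => hij (Prod.ext (g2 _ hi.1 _ hj.1 h') h)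
    · exact fun h => (g4 _ hi.1).1 (h ▸ hj.2)
    · exact fun h => (g4 _ hi.1).2 (h ▸ hj.2)
  have hs : ∀ i ∈ M ×ˢ U, (S i).card = 2 := by
    intro i hi
    rw [Finset.mem_product] at hi
    exact card_cherry (g3 _ hi.1 _ hi.1)
  have hμ : (M ×ˢ U).card * (1 / (Fintype.card α : ℝ)) ^ 2 ≤ k * n ^ 2 * p ^ 2 := by
    rw [← hp]
    refine mul_le_mul_of_nonneg_right ?_ (by positivity)
    rw [Finset.card_product]
    have : M.card * U.card ≤ n * (k * n) := Nat.mul_le_mul hM hU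
    calc ((M.card * U.card : ℕ) : ℝ) ≤ (n * (k * n) : ℕ) := Nat.cast_le.2 this
      _ = k * n ^ 2 := by push_cast; ring
  refine le_trans (Nat.cast_le.2 (Finset.card_le_card ?_))
    (card_upper_tail a₀ (M ×ˢ U) S 2 _ hdisj hs hμ)
  refine Finset.monotone_filter_right _ fun ω _ h => h.trans_le ?_
  rw [Nat.cast_le]
  refine le_blockCount (Finset.filter_subset _ _) fun z hz => ?_
  rw [Finset.mem_filter] at hz
  simp only [hS, cherry, Finset.mem_insert, Finset.mem_singleton, forall_eq_or_imp, forall_eq]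
  exact ⟨hz.2.1.2.2, hz.2.2.2.2⟩

/-- If the union bound over all vertices, pairs of vertices and pairs `(M, U)` is less than `1`,
a pseudorandom graph exists. -/
theorem exists_isPseudorandom (hk : 3 ≤ k) {N n : ℕ}
    (hN : ∀ z : ZMod k, (univ.filter (fun v => (P v : ZMod k) = z)).card = N) (a₀ : α)
    {p : ℝ} (hp : p = 1 / (Fintype.card α : ℝ))
    (hlt : Fintype.card V * (2 * Real.exp (-(N * p / 4))) +
      (Fintype.card V : ℝ) ^ 2 * (2 * Real.exp (-(N * p ^ 2 / 4))) +
      (Fintype.card V : ℝ) ^ ((k + 2) * n) * Real.exp (-(2 * (k * n ^ 2 * p ^ 2))) < 1) :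
    ∃ G : SimpleGraph V, IsPseudorandom k N n p G P := by
  set T : ℝ := ((Fintype.card (Sym2 V → α) : ℕ) : ℝ) with hT
  have hTpos : 0 < T := by
    rw [hT]
    exact_mod_cast Fintype.card_pos_iff.2 ⟨fun _ => a₀⟩
  set b1 : V → Finset (Sym2 V → α) := fun v => univ.filter (fun ω : Sym2 V → α =>
      ((forwardNbrs k (selectedGraph k P a₀ ω) P v).card : ℝ) < N * p / 4 ∨
      4 * (N * p) < (forwardNbrs k (selectedGraph k P a₀ ω) P v).card) with hb1
  set b2 : V × V → Finset (Sym2 V → α) := fun z => univ.filter (fun ω : Sym2 V → α =>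
      ((middleNbrs k (selectedGraph k P a₀ ω) P z.1 z.2).card : ℝ) < N * p ^ 2 / 4 ∨
      4 * (N * p ^ 2) < (middleNbrs k (selectedGraph k P a₀ ω) P z.1 z.2).card) with hb2
  set b3 : Finset (V × V) × Finset V → Finset (Sym2 V → α) := fun z =>
    univ.filter (fun ω : Sym2 V → α => 4 * (k * n ^ 2 * p ^ 2) <
      (((z.1 ×ˢ z.2).filter (fun z => (selectedGraph k P a₀ ω).Adj z.1.1 z.2 ∧
        (selectedGraph k P a₀ ω).Adj z.1.2 z.2)).card : ℝ)) with hb3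
  set I2 : Finset (V × V) := univ.filter (fun z => (P z.2 : ZMod k) = P z.1 + 2) with hI2
  set I3 : Finset (Finset (V × V) × Finset V) :=
    (univ.filter (fun M : Finset (V × V) => M.Nonempty ∧ M.card ≤ n) ×ˢ
      univ.filter (fun U : Finset V => U.Nonempty ∧ U.card ≤ k * n)).filter
        (fun z => IsMatchingOff z.1 z.2) with hI3
  have c1 : (((univ : Finset V).biUnion b1).card : ℝ) ≤
      T * (Fintype.card V * (2 * Real.exp (-(N * p / 4)))) := by
    have := card_biUnion_le_real univ b1 _ (fun v _ => card_bad_deg hk hN a₀ v hp)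
    rw [Finset.card_univ] at this
    refine this.trans (le_of_eq ?_)
    ring
  have c2 : ((I2.biUnion b2).card : ℝ) ≤
      T * ((Fintype.card V : ℝ) ^ 2 * (2 * Real.exp (-(N * p ^ 2 / 4)))) := by
    have := card_biUnion_le_real I2 b2 _
      (fun z hz => card_bad_codeg hk hN a₀ (Finset.mem_filter.1 hz).2 hp)
    refine this.trans ?_
    have hI : (I2.card : ℝ) ≤ (Fintype.card V : ℝ) ^ 2 := by
      have h : I2.card ≤ Fintype.card (V × V) := Finset.card_le_univ _
      rw [Fintype.card_prod] at h
      rw [sq]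
      exact_mod_cast h
    refine (mul_le_mul_of_nonneg_right hI (by positivity)).trans (le_of_eq ?_)
    ring
  have c3 : ((I3.biUnion b3).card : ℝ) ≤
      T * ((Fintype.card V : ℝ) ^ ((k + 2) * n) * Real.exp (-(2 * (k * n ^ 2 * p ^ 2)))) := by
    have := card_biUnion_le_real I3 b3 _ (fun z hz => by
      have hz' := Finset.mem_filter.1 hz
      have hz'' := Finset.mem_product.1 hz'.1
      exact card_bad_matching a₀ (Finset.mem_filter.1 hz''.1).2.2
        (Finset.mem_filter.1 hz''.2).2.2 hz'.2 hp)
    refine this.trans ?_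
    have hI : (I3.card : ℝ) ≤ (Fintype.card V : ℝ) ^ ((k + 2) * n) := by
      have h : I3.card ≤ Fintype.card (V × V) ^ n * Fintype.card V ^ (k * n) := by
        refine (Finset.card_filter_le _ _).trans ?_
        rw [Finset.card_product]
        exact Nat.mul_le_mul (card_small_sets_le n) (card_small_sets_le (k * n))
      have e : Fintype.card (V × V) ^ n * Fintype.card V ^ (k * n) =
          Fintype.card V ^ ((k + 2) * n) := by
        rw [Fintype.card_prod, ← sq, ← pow_mul, ← pow_add]
        congr 1; ring
      rw [e] at h
      exact_mod_cast h
    refine (mul_le_mul_of_nonneg_right hI (by positivity)).trans (le_of_eq ?_)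
    ring
  have hbad : ((univ : Finset V).biUnion b1 ∪ I2.biUnion b2 ∪ I3.biUnion b3).card <
      (univ : Finset (Sym2 V → α)).card := by
    rw [← Nat.cast_lt (α := ℝ), Finset.card_univ]
    have h1 := Finset.card_union_le ((univ : Finset V).biUnion b1 ∪ I2.biUnion b2)
      (I3.biUnion b3)
    have h2 := Finset.card_union_le ((univ : Finset V).biUnion b1) (I2.biUnion b2)
    have h3 : (((univ : Finset V).biUnion b1 ∪ I2.biUnion b2 ∪ I3.biUnion b3).card : ℝ) ≤
        ((univ : Finset V).biUnion b1).card + (I2.biUnion b2).card + (I3.biUnion b3).card := by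
      exact_mod_cast h1.trans (by omega)
    rw [← hT]
    nlinarith
  obtain ⟨ω, -, hω⟩ := Finset.exists_mem_notMem_of_card_lt_card hbad
  simp only [Finset.mem_union, Finset.mem_biUnion, not_or, not_exists, not_and] at hω
  obtain ⟨⟨h1, h2⟩, h3⟩ := hω
  refine ⟨selectedGraph k P a₀ ω, fun u v h => h.2.1, fun v => ?_, fun x y hxy => ?_, ?_⟩
  · have h := h1 v (Finset.mem_univ _)
    simp only [hb1, Finset.mem_filter, Finset.mem_univ, true_and, not_or, not_lt] at h
    exact h
  · have h := h2 (x, y) (Finset.mem_filter.2 ⟨Finset.mem_univ _, hxy⟩)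
    simp only [hb2, Finset.mem_filter, Finset.mem_univ, true_and, not_or, not_lt] at h
    exact h
  · intro M U hM hU g1 g2 g3 g4
    rcases M.eq_empty_or_nonempty with rfl | hM0
    · simp only [Finset.empty_product, Finset.filter_empty, Finset.card_empty, Nat.cast_zero]
      positivity
    rcases U.eq_empty_or_nonempty with rfl | hU0
    · simp only [Finset.product_empty, Finset.filter_empty, Finset.card_empty, Nat.cast_zero]
      positivity
    have h := h3 (M, U) (Finset.mem_filter.2 ⟨Finset.mem_product.2
      ⟨Finset.mem_filter.2 ⟨Finset.mem_univ _, hM0, hM⟩,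
        Finset.mem_filter.2 ⟨Finset.mem_univ _, hU0, hU⟩⟩, g1, g2, g3, g4⟩)
    simp only [hb3, Finset.mem_filter, Finset.mem_univ, true_and, not_lt] at h
    exact h

end RandomGraph

/-! ### Choice of parameters -/

/-- The reciprocal of some positive integer lies between `2 √(L / x)` and `4 √(L / x)`. -/
theorem exists_reciprocal {x L : ℝ} (hL : 0 < L) (hx : 16 * L ≤ x) :
    ∃ q : ℕ, 4 * L ≤ x * (1 / ((q : ℝ) + 1)) ^ 2 ∧ x * (1 / ((q : ℝ) + 1)) ^ 2 ≤ 16 * L := by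
  have hx0 : 0 < x := by linarith
  set s := Real.sqrt (x / (16 * L)) with hs
  have hs2 : s ^ 2 = x / (16 * L) := Real.sq_sqrt (by positivity)
  have hs1 : 1 ≤ s := by
    rw [hs, Real.one_le_sqrt, one_le_div (by positivity)]
    exact hx
  have hxs : x = 16 * L * s ^ 2 := by rw [hs2]; field_simp
  have h1 : s ≤ (⌊s⌋₊ : ℝ) + 1 := (Nat.lt_floor_add_one s).le
  have h2 : (⌊s⌋₊ : ℝ) + 1 ≤ 2 * s := by
    have := Nat.floor_le (show 0 ≤ s by linarith)
    linarith
  have h0 : 0 < (⌊s⌋₊ : ℝ) + 1 := by positivity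
  refine ⟨⌊s⌋₊, ?_, ?_⟩
  · rw [one_div, inv_pow, ← div_eq_mul_inv, le_div_iff₀ (by positivity), hxs]
    have : ((⌊s⌋₊ : ℝ) + 1) ^ 2 ≤ (2 * s) ^ 2 := pow_le_pow_left₀ h0.le h2 2
    nlinarith
  · rw [one_div, inv_pow, ← div_eq_mul_inv, div_le_iff₀ (by positivity), hxs]
    have : s ^ 2 ≤ ((⌊s⌋₊ : ℝ) + 1) ^ 2 := pow_le_pow_left₀ (by linarith) h1 2
    nlinarith

/-- The union bound of `exists_isPseudorandom` holds once `v ≤ n ^ 2`, with `L = log n`. -/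
theorem union_bound_lt_one {k n : ℕ} (hk : 3 ≤ k) {v N p : ℝ} (hn : 6 ≤ n) (hv0 : 0 ≤ v)
    (hv : v ≤ (n : ℝ) ^ 2) (hp0 : 0 ≤ p) (hp1 : p ≤ 1) (hN0 : 0 ≤ N)
    (hN : 8 * Real.log n ≤ N * p ^ 2 / 4) (hnp : 4 * Real.log n ≤ n * p ^ 2) :
    v * (2 * Real.exp (-(N * p / 4))) + v ^ 2 * (2 * Real.exp (-(N * p ^ 2 / 4))) +
      v ^ ((k + 2) * n) * Real.exp (-(2 * (k * n ^ 2 * p ^ 2))) < 1 := by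
  set L := Real.log n with hL
  have hn6 : (6 : ℝ) ≤ n := by exact_mod_cast hn
  have hn0 : (0 : ℝ) < n := by linarith
  have hL0 : 0 < L := Real.log_pos (by linarith)
  have hexp : Real.exp L = n := Real.exp_log hn0
  have hv' : v ≤ Real.exp (2 * L) := by
    rw [mul_comm, Real.exp_mul, hexp]
    exact_mod_cast hv
  have hx : Real.exp (-L) ≤ 1 / 6 := by
    rw [Real.exp_neg, hexp, inv_eq_one_div]
    exact one_div_le_one_div_of_le (by norm_num) hn6
  have t1 : v * (2 * Real.exp (-(N * p / 4))) ≤ 2 * Real.exp (-L) := by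
    have hle : Real.exp (-(N * p / 4)) ≤ Real.exp (-(8 * L)) := by
      refine Real.exp_le_exp.2 ?_
      have : N * p ^ 2 ≤ N * p := mul_le_mul_of_nonneg_left (by nlinarith) hN0
      linarith
    calc v * (2 * Real.exp (-(N * p / 4)))
        ≤ Real.exp (2 * L) * (2 * Real.exp (-(8 * L))) := by gcongr
      _ = 2 * Real.exp (2 * L + -(8 * L)) := by rw [Real.exp_add]; ring
      _ ≤ 2 * Real.exp (-L) := by
        gcongr
        linarith
  have t2 : v ^ 2 * (2 * Real.exp (-(N * p ^ 2 / 4))) ≤ 2 * Real.exp (-L) := by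
    have hle : Real.exp (-(N * p ^ 2 / 4)) ≤ Real.exp (-(8 * L)) :=
      Real.exp_le_exp.2 (by linarith)
    calc v ^ 2 * (2 * Real.exp (-(N * p ^ 2 / 4)))
        ≤ Real.exp (2 * L) ^ 2 * (2 * Real.exp (-(8 * L))) := by gcongr
      _ = 2 * Real.exp (2 * L + 2 * L + -(8 * L)) := by rw [Real.exp_add, Real.exp_add]; ring
      _ ≤ 2 * Real.exp (-L) := by
        gcongr
        linarith
  have t3 : v ^ ((k + 2) * n) * Real.exp (-(2 * (k * n ^ 2 * p ^ 2))) ≤ Real.exp (-L) := by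
    calc v ^ ((k + 2) * n) * Real.exp (-(2 * (k * n ^ 2 * p ^ 2)))
        ≤ Real.exp (2 * L) ^ ((k + 2) * n) * Real.exp (-(2 * (k * n ^ 2 * p ^ 2))) := by gcongr
      _ = Real.exp (((k + 2) * n) * (2 * L) + -(2 * (k * n ^ 2 * p ^ 2))) := by
        rw [Real.exp_add, ← Real.exp_nat_mul]
        push_cast
        rfl
      _ ≤ Real.exp (-L) := by
        refine Real.exp_le_exp.2 ?_
        have hk3 : (3 : ℝ) ≤ k := by exact_mod_cast hk
        have h1 : (k * n : ℝ) * (4 * L) ≤ (k * n) * (n * p ^ 2) :=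
          mul_le_mul_of_nonneg_left hnp (by positivity)
        have h2 : 3 * (n * L) ≤ k * (n * L) := mul_le_mul_of_nonneg_right hk3 (by positivity)
        have h3 : 6 * L ≤ n * L := mul_le_mul_of_nonneg_right hn6 hL0.le
        nlinarith
  linarith

/-- Two-sided bounds whose ratio depends only on `k` compare the cycles meeting few vertices
with all cycles. -/
theorem z_lt_of_bounds {k : ℕ} (hk : 3 ≤ k) {r n K N p z t c : ℝ} (hr : 0 < r) (hn : 0 < n)
    (hp : 0 < p) (hK : 2 * k * 16 ^ k < K) (hN : N = K * r * n) (hc : c ≤ k * n)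
    (hz : z ≤ c * ((4 * (N * p)) ^ (k - 2) * (4 * (N * p ^ 2))))
    (ht : N * ((N * p / 4) ^ (k - 2) * (N * p ^ 2 / 4)) ≤ t) : z < t / (2 * r) := by
  have hK0 : 0 < K := lt_of_le_of_lt (by positivity) hK
  have hN0 : 0 < N := by rw [hN]; positivity
  set X : ℝ := (N * p) ^ (k - 2) * (N * p ^ 2) with hX
  have hX0 : 0 < X := by positivity
  have e1 : (4 * (N * p)) ^ (k - 2) * (4 * (N * p ^ 2)) = 4 ^ (k - 1) * X := by
    rw [hX, mul_pow, show k - 1 = k - 2 + 1 by omega, pow_succ]; ring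
  have e2 : (N * p / 4) ^ (k - 2) * (N * p ^ 2 / 4) = X / 4 ^ (k - 1) := by
    rw [hX, div_pow, show k - 1 = k - 2 + 1 by omega, pow_succ]
    field_simp
    rw [pow_succ]
  rw [e1] at hz
  rw [e2] at ht
  set F : ℝ := 4 ^ (k - 1) with hF
  have hF0 : 0 < F := by positivity
  have hFF : F * F ≤ 16 ^ k := by
    rw [hF, ← mul_pow]
    norm_num
    exact pow_le_pow_right₀ (by norm_num) (by omega)
  rw [lt_div_iff₀ (by positivity)]
  refine lt_of_lt_of_le ?_ ht
  rw [← mul_div_assoc, lt_div_iff₀ hF0]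
  have hk0 : (0 : ℝ) < k := by exact_mod_cast (by omega : 0 < k)
  calc z * (2 * r) * F ≤ (k * n * (F * X)) * (2 * r) * F := by
        gcongr
        exact hz.trans (by gcongr)
    _ = (2 * k * (F * F)) * (r * n * X) := by ring
    _ ≤ (2 * k * 16 ^ k) * (r * n * X) := by gcongr
    _ < K * (r * n * X) := by gcongr
    _ = N * X := by rw [hN]; ring

/-- Since `n p ≤ 4 √(n L)`, the upper bound for the number of cycles, which is at most
`(4 N p) ^ k`, has the required form. -/
theorem t_le_of_bounds {k : ℕ} (hk : 3 ≤ k) {r n K L N p t : ℝ} (hr : 0 < r) (hn : 0 < n)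
    (hL : 0 < L) (hp : 0 < p) (hK : 0 < K) (hN : N = K * r * n) (hnp : n * p ^ 2 ≤ 16 * L)
    (ht : t ≤ N * ((4 * (N * p)) ^ (k - 2) * (4 * (N * p ^ 2)))) :
    t ≤ (16 * K) ^ k * r ^ k * (n * L) ^ ((k : ℝ) / 2) := by
  have hN0 : 0 < N := by rw [hN]; positivity
  have hnp' : n * p ≤ 4 * Real.sqrt (n * L) := by
    refine (pow_le_pow_iff_left₀ (by positivity) (by positivity) two_ne_zero).1 ?_
    rw [mul_pow, mul_pow, Real.sq_sqrt (by positivity)]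
    nlinarith
  have hs : Real.sqrt (n * L) ^ k = (n * L) ^ ((k : ℝ) / 2) := by
    rw [Real.sqrt_eq_rpow, ← Real.rpow_natCast, ← Real.rpow_mul (by positivity)]
    congr 1; ring
  rw [← hs, ← mul_pow, ← mul_pow]
  obtain ⟨m, rfl⟩ : ∃ m, k = m + 2 := ⟨k - 2, by omega⟩
  calc t ≤ N * ((4 * (N * p)) ^ m * (4 * (N * p ^ 2))) := ht
    _ ≤ 4 * (N * ((4 * (N * p)) ^ m * (4 * (N * p ^ 2)))) := by
      have : 0 ≤ N * ((4 * (N * p)) ^ m * (4 * (N * p ^ 2))) := by positivity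
      linarith
    _ = (4 * (N * p)) ^ (m + 2) := by ring
    _ = (4 * (K * r * (n * p))) ^ (m + 2) := by rw [hN]; ring
    _ ≤ (4 * (K * r * (4 * Real.sqrt (n * L)))) ^ (m + 2) := by gcongr
    _ = (16 * K * r * Real.sqrt (n * L)) ^ (m + 2) := by ring

theorem exists_balanced_partition (k N : ℕ) (hk : 3 ≤ k) :
    ∃ P : Fin (k * N) → ℕ, (∀ v, P v < k) ∧
      (∀ z : ZMod k, (univ.filter (fun v => (P v : ZMod k) = z)).card = N) := by
  have : NeZero k := ⟨by omega⟩
  refine ⟨fun v => (finProdFinEquiv.symm v).1, fun v => (finProdFinEquiv.symm v).1.2, ?_⟩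
  intro z
  have h : univ.filter (fun v : Fin (k * N) => (((finProdFinEquiv.symm v).1 : ℕ) : ZMod k) = z) =
      (univ : Finset (Fin N)).image
        (fun a => finProdFinEquiv ((⟨z.val, ZMod.val_lt z⟩ : Fin k), a)) := by
    ext v
    simp only [Finset.mem_filter, Finset.mem_univ, true_and, Finset.mem_image]
    constructor
    · intro hv
      refine ⟨(finProdFinEquiv.symm v).2, ?_⟩
      rw [← Equiv.eq_symm_apply]
      refine Prod.ext (Fin.ext ?_) rfl
      simp only
      rw [← hv, ZMod.val_cast_of_lt (Fin.isLt _)]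
    · rintro ⟨a, rfl⟩
      simp
  rw [h, Finset.card_image_of_injective, Finset.card_univ, Fintype.card_fin]
  intro a b hab
  have := finProdFinEquiv.injective hab
  exact (Prod.mk.inj this).2

/-- Proposition 2: for every `k ≥ 3` there is `C > 0` such that for every `r ≥ 2` and all
sufficiently large `n` there is a `C_k`-colorable graph `G` satisfying:
(i) for every family `𝓑` of `n` pairwise vertex-disjoint proper `(k-1)`-paths and every
`A ⊆ V(G) \ ⋃_{B∈𝓑} V(B)` with `|A| ≤ n`, `y_{A,𝓑} < t_𝓑 / (2kr)`;
(ii) for every `C' ⊆ V(G)` with `|C'| ≤ (k-1)n`, `z_{C'} < t_k / (2r)`;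
(iii) `t_k ≤ C · r^k · (n log n)^{k/2}`. -/
theorem exists_good_graph (k : ℕ) (hk : 3 ≤ k) :
    ∃ C : ℝ, 0 < C ∧ ∀ r : ℕ, 2 ≤ r → ∃ N : ℕ, ∀ n : ℕ, N ≤ n →
      ∃ (m : ℕ) (G : SimpleGraph (Fin m)) (P : Fin m → ℕ),
        CkColorable k G P ∧
        (∀ (𝓑 : Finset (Finset (Fin m))) (A : Finset (Fin m)),
          IsGoodFamily k G P n 𝓑 → A ⊆ Finset.univ \ 𝓑.biUnion id → A.card ≤ n →
          (yCount k G P A 𝓑 : ℝ) < (tBCount k G P 𝓑 : ℝ) / (2 * k * r)) ∧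
        (∀ C' : Finset (Fin m), C'.card ≤ (k - 1) * n →
          (zCount k G P C' : ℝ) < (tkCount k G P : ℝ) / (2 * r)) ∧
        (tkCount k G P : ℝ) ≤ C * (r : ℝ) ^ k * ((n : ℝ) * Real.log n) ^ ((k : ℝ) / 2) := by
  have : NeZero k := ⟨by omega⟩
  have hk0 : (0 : ℝ) < k := by exact_mod_cast (by omega : 0 < k)
  have hk1 : (1 : ℝ) ≤ k := by exact_mod_cast (by omega : 1 ≤ k)
  -- Each part has `K r n` vertices: the factor `32 k ^ 3` serves (i) and `16 ^ k` serves (ii).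
  obtain ⟨K, hK⟩ : ∃ K : ℕ, K = 32 * k ^ 3 * 16 ^ k := ⟨_, rfl⟩
  have hKr : (K : ℝ) = 32 * k ^ 3 * 16 ^ k := by rw [hK]; push_cast; rfl
  have h16 : (16 : ℝ) ≤ 16 ^ k := le_self_pow₀ (by norm_num) (by omega)
  have hk3 : (k : ℝ) ≤ k ^ 3 := le_self_pow₀ hk1 (by norm_num)
  have hK0 : (0 : ℝ) < K := by rw [hKr]; positivity
  have hK1 : 32 * (k : ℝ) ^ 3 < K := by
    rw [hKr]
    have : (0 : ℝ) < 32 * k ^ 3 := by positivity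
    nlinarith
  have hK2 : 2 * (k : ℝ) * 16 ^ k < K := by
    rw [hKr]
    have h : 2 * (k : ℝ) < 32 * k ^ 3 := by linarith
    exact mul_lt_mul_of_pos_right h (by positivity)
  refine ⟨(16 * K) ^ k, by positivity, fun r hr => ?_⟩
  have hr2 : (2 : ℝ) ≤ r := by exact_mod_cast hr
  have hlog : ∀ᶠ n : ℕ in Filter.atTop, 16 * Real.log n ≤ n := by
    have h := (Real.isLittleO_log_id_atTop.bound (show (0 : ℝ) < 1 / 16 by norm_num))
    filter_upwards [tendsto_natCast_atTop_atTop.eventually h, Filter.eventually_ge_atTop 1]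
      with n hn hn1
    have h0 : 0 ≤ Real.log n := Real.log_natCast_nonneg n
    simp only [id, Real.norm_eq_abs, abs_of_nonneg h0, Nat.abs_cast] at hn
    linarith
  obtain ⟨N, hN⟩ := Filter.eventually_atTop.1
    ((hlog.and (Filter.eventually_ge_atTop 6)).and (Filter.eventually_ge_atTop (k * (K * r))))
  refine ⟨N, fun n hn => ?_⟩
  obtain ⟨⟨hlogn, hn6⟩, hnbig⟩ := hN n hn
  have hn6' : (6 : ℝ) ≤ n := by exact_mod_cast hn6
  have hn0 : (0 : ℝ) < n := by linarith
  have hL0 : 0 < Real.log n := Real.log_pos (by linarith)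
  obtain ⟨q, hq1, hq2⟩ := exists_reciprocal hL0 hlogn
  obtain ⟨p, hp⟩ : ∃ p : ℝ, p = 1 / ((q : ℝ) + 1) := ⟨_, rfl⟩
  rw [← hp] at hq1 hq2
  have hp0 : 0 < p := by rw [hp]; positivity
  have hp1 : p ≤ 1 := by
    rw [hp, div_le_one (by positivity)]
    have : (0 : ℝ) ≤ q := Nat.cast_nonneg q
    linarith
  obtain ⟨M, hM⟩ : ∃ M : ℕ, M = K * r * n := ⟨_, rfl⟩
  have hMr : (M : ℝ) = K * r * n := by rw [hM]; push_cast; rfl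
  obtain ⟨P, hP, hcard⟩ := exists_balanced_partition k M hk
  have hV : ((k * M : ℕ) : ℝ) ≤ (n : ℝ) ^ 2 := by
    have h : k * M ≤ n ^ 2 := by
      calc k * M = k * (K * r) * n := by rw [hM]; ring
        _ ≤ n * n := Nat.mul_le_mul_right _ hnbig
        _ = n ^ 2 := (sq n).symm
    exact_mod_cast h
  have hMp : 8 * Real.log n ≤ M * p ^ 2 / 4 := by
    have h1 : (K * r : ℝ) * (4 * Real.log n) ≤ (K * r) * (n * p ^ 2) :=
      mul_le_mul_of_nonneg_left hq1 (by positivity)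
    have h2 : (32 : ℝ) ≤ K := by
      have : (1 : ℝ) ≤ k ^ 3 := one_le_pow₀ hk1
      linarith
    have h3 : (64 : ℝ) ≤ K * r := by nlinarith
    have h4 := mul_le_mul_of_nonneg_right h3 hL0.le
    rw [hMr]
    linarith
  obtain ⟨G, hG⟩ := exists_isPseudorandom (α := Fin (q + 1)) (n := n) hk hcard 0
    (p := p) (by rw [hp, Fintype.card_fin]; push_cast; rfl)
    (by
      rw [Fintype.card_fin]
      exact union_bound_lt_one hk hn6 (Nat.cast_nonneg _) hV hp0.le hp1 (Nat.cast_nonneg _)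
        hMp hq1)
  have hpart0 : (univ.filter (fun v => P v = 0)).card = M := by
    refine Eq.trans (congrArg Finset.card ?_) (hcard 0)
    ext v
    simp only [Finset.mem_filter, Finset.mem_univ, true_and]
    constructor
    · intro h
      rw [h, Nat.cast_zero]
    · intro h
      exact eq_of_cast_eq (hP v) (by omega) (by rw [h, Nat.cast_zero])
  obtain ⟨ht1, ht2⟩ := tkCount_bounds hk hP hp0.le hpart0 hG
  refine ⟨k * M, G, P, ⟨hP, fun u v huv => ?_⟩, ?_, ?_, ?_⟩
  · rw [eq_mod_iff (hP v), eq_mod_iff (hP u)]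
    exact hG.adj u v huv
  · intro 𝓑 A h𝓑 _ hA
    have hy := yCount_le hk hP hG h𝓑 hA
    have ht := le_tBCount hk hP hG h𝓑
    rw [lt_div_iff₀ (by positivity)]
    have hpos : (0 : ℝ) < r * n ^ 2 * p ^ 2 := by positivity
    calc (yCount k G P A 𝓑 : ℝ) * (2 * k * r)
        ≤ k * (4 * (k * n ^ 2 * p ^ 2)) * (2 * k * r) := by gcongr
      _ = 32 * k ^ 3 * (r * n ^ 2 * p ^ 2) / 4 := by ring
      _ < K * (r * n ^ 2 * p ^ 2) / 4 := by gcongr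
      _ = n * (M * p ^ 2 / 4) := by rw [hMr]; ring
      _ ≤ tBCount k G P 𝓑 := ht
  · intro C' hC'
    refine z_lt_of_bounds hk (by linarith) hn0 hp0 hK2 hMr ?_ (zCount_le hk hP hp0.le hG C') ht1
    have h : C'.card ≤ k * n := hC'.trans (Nat.mul_le_mul_right _ (Nat.sub_le _ _))
    exact_mod_cast h
  · exact t_le_of_bounds hk (by linarith) hn0 hL0 hp0 hK0 hMr hq2 ht2
end

section
/- Let k ≥ 3 and r ≥ 2 be fixed integers and set c = 16k²r. For each n, let p = sqrt(log n / n) and consider the random graph G = G(k, cn, p). Then the probability that there exist a family 𝓑 of n pairwise vertex-disjoint proper (k-1)-paths of G and a set A ⊆ V(G) \ ⋃_{B∈𝓑} V(B) with |A| ≤ n such that y_{A,𝓑} ≥ t_𝓑/(2kr) tends to 0 as n → ∞. -/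
/-!
Each proper `k`-cycle extending a path `B` that misses part `j` comes from a common neighbour in
part `j` of the two endpoints of `B`, and since disjoint paths never fit into one `k`-cycle,
`t_𝓑` is the sum over `B ∈ 𝓑` of the numbers of such common neighbours (`exists_endpoints`).
Write `C = 16k²r` and `N = Cn`. Two events control everything.

* Lower bound on `t_𝓑`. The number of common neighbours of two fixed vertices in parts `j - 1`
  and `j + 1` is binomial with mean `N p² = C log n`. A Chernoff bound and a union bound over the
  `kN²` pairs show that with high probability all of them exceed `(3/4) C log n`
  (`measureReal_commonNbrs_le`). Then `t_𝓑 / (2kr) ≥ 6 k n log n` for every family.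
* Upper bound on `y_{A,𝓑}`. If `y_{A,𝓑} ≥ 6 k n log n`, then for some part `j` the paths of `𝓑`
  missing `j` account for at least `6 n log n` of these extensions (`exists_cherryCount_ge`).
  If there are `m` such paths, they reach into a set of at most `n + (n - m)` vertices of part `j`,
  so for fixed endpoints and a fixed target set of size `2n - m` the count is binomial with mean
  `m (2n - m) p² ≤ n log n`: treating one part at a time makes all edges involved distinct.
  The endpoints and the target set can be chosen in at most `N ^ (2m + (2n - m)) ≤ N ^ (3n)` ways,
  and the Chernoff bound `exp (-(17/4) n log n)` beats this union (`measureReal_cherryCount_le`,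
  `total_bound_le`).

The two failure probabilities add up to at most `3k / n` once `n ≥ C⁴`.
-/

open Finset MeasureTheory
open scoped Classical ENNReal

/-- The Bernoulli measure on `Bool` with success probability `p` (for `p ∈ [0,1]`). -/
noncomputable def bernoulliM (p : ℝ) : Measure Bool :=
  (ENNReal.ofReal p) • Measure.dirac true + (ENNReal.ofReal (1 - p)) • Measure.dirac false

/-- The law of the random graph `G(k, N, p)`: the sample space is one Boolean (presence of
an edge) for each triple `(i, a, b)`, representing the potential edge between vertex `a` of
part `i` and vertex `b` of part `i+1 (mod k)`; edges appear independently with probability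
`p`. -/
noncomputable def edgeMeasure (k N : ℕ) (p : ℝ) : Measure (Fin k × Fin N × Fin N → Bool) :=
  Measure.pi (fun _ => bernoulliM p)

/-- The random graph `G(k, N, p)` determined by the sample point `ω`: its vertex set is
`Fin k × Fin N` (part `i` is `{i} × Fin N`), and `(i, a)` is joined to `(i+1 mod k, b)`
exactly when `ω (i, a, b) = true`. -/
def randGraph (k N : ℕ) (ω : Fin k × Fin N × Fin N → Bool) : SimpleGraph (Fin k × Fin N) :=
  SimpleGraph.fromRel (fun u v => ((u.1 : ℕ) + 1) % k = (v.1 : ℕ) ∧ ω (u.1, u.2, v.2) = true)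

/-- The part map of the random graph `G(k, N, p)`: vertex `(i, a)` lies in part `i`. -/
def randPart (k N : ℕ) (v : Fin k × Fin N) : ℕ := (v.1 : ℕ)

/-! ### Edge probabilities and an exponential moment bound -/

lemma isProbabilityMeasure_bernoulliM {p : ℝ} (h0 : 0 ≤ p) (h1 : p ≤ 1) :
    IsProbabilityMeasure (bernoulliM p) := by
  constructor
  simp only [bernoulliM, Measure.coe_add, Measure.coe_smul, Pi.add_apply, Pi.smul_apply,
    measure_univ, smul_eq_mul, mul_one]
  rw [← ENNReal.ofReal_add h0 (by linarith)]
  simp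

lemma bernoulliM_singleton_true (p : ℝ) : bernoulliM p {true} = ENNReal.ofReal p := by
  simp [bernoulliM]

lemma measureReal_forall_mem_true {ι : Type*} [Fintype ι] {p : ℝ} (h0 : 0 ≤ p) (h1 : p ≤ 1)
    (E : Finset ι) :
    (Measure.pi (fun _ : ι => bernoulliM p)).real {ω | ∀ i ∈ E, ω i = true} = p ^ E.card := by
  have := isProbabilityMeasure_bernoulliM h0 h1
  have hset : {ω : ι → Bool | ∀ i ∈ E, ω i = true}
      = Set.univ.pi (fun i => if i ∈ E then {true} else Set.univ) := by
    ext ω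
    simp only [Set.mem_ofPred_eq, Set.mem_pi, Set.mem_univ, true_implies]
    refine forall_congr' fun i => ?_
    by_cases hi : i ∈ E <;> simp [hi]
  have hval : ∀ i : ι, bernoulliM p (if i ∈ E then {true} else Set.univ)
      = if i ∈ E then ENNReal.ofReal p else 1 := by
    intro i
    by_cases hi : i ∈ E
    · simp only [hi, if_true, bernoulliM_singleton_true]
    · simp only [hi, if_false, measure_univ]
  rw [Measure.real, hset, Measure.pi_pi]
  simp_rw [hval]
  rw [Finset.prod_ite_mem, Finset.univ_inter, Finset.prod_const, ENNReal.toReal_pow,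
    ENNReal.toReal_ofReal h0]

/-- The number of indices `t` for which the two potential edges `e₁ t` and `e₂ t` are both
present in `ω`. -/
noncomputable def pairCount {ι τ : Type*} [Fintype τ] (e₁ e₂ : τ → ι) (ω : ι → Bool) : ℕ :=
  (Finset.univ.filter (fun t => ω (e₁ t) = true ∧ ω (e₂ t) = true)).card

/-- When the `2|τ|` potential edges are pairwise distinct, `pairCount` is binomial with
parameters `|τ|` and `p²`, which gives its moment generating function. The proof expands
`exp (s * X)` as a sum over subsets of `τ`. -/
lemma mgf_pairCount {ι τ : Type*} [Fintype ι] [Fintype τ] {p : ℝ} (h0 : 0 ≤ p) (h1 : p ≤ 1)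
    (e₁ e₂ : τ → ι) (hinj : Function.Injective (Sum.elim e₁ e₂)) (s : ℝ) :
    ProbabilityTheory.mgf (fun ω => (pairCount e₁ e₂ ω : ℝ))
      (Measure.pi (fun _ : ι => bernoulliM p)) s = (1 + (Real.exp s - 1) * p ^ 2) ^ Fintype.card τ := by
  have := isProbabilityMeasure_bernoulliM h0 h1
  let E : Finset τ → Finset ι := fun S => (S.disjSum S).image (Sum.elim e₁ e₂)
  have hE : ∀ S, (E S).card = 2 * S.card := by
    intro S
    rw [Finset.card_image_of_injective _ hinj, Finset.card_disjSum, two_mul]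
  have hexp : ∀ ω : ι → Bool, Real.exp (s * (pairCount e₁ e₂ ω : ℝ))
      = ∑ S ∈ (Finset.univ : Finset τ).powerset,
          Set.indicator {ω : ι → Bool | ∀ i ∈ E S, ω i = true}
            (fun _ => (Real.exp s - 1) ^ S.card) ω := by
    intro ω
    have hprod : Real.exp (s * (pairCount e₁ e₂ ω : ℝ))
        = ∏ t : τ, (1 + if ω (e₁ t) = true ∧ ω (e₂ t) = true then Real.exp s - 1 else 0) := by
      rw [mul_comm, Real.exp_nat_mul, pairCount, ← Finset.prod_const, Finset.prod_filter]
      refine Finset.prod_congr rfl fun t _ => ?_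
      split_ifs <;> ring
    rw [hprod, Finset.prod_one_add]
    refine Finset.sum_congr rfl fun S _ => ?_
    by_cases hS : ∀ t ∈ S, ω (e₁ t) = true ∧ ω (e₂ t) = true
    · rw [Set.indicator_of_mem, ← Finset.prod_const]
      · exact Finset.prod_congr rfl fun t ht => if_pos (hS t ht)
      · intro i hi
        simp only [E, Finset.mem_image, Finset.mem_disjSum] at hi
        obtain ⟨x, ⟨t, ht, rfl⟩ | ⟨t, ht, rfl⟩, rfl⟩ := hi
        exacts [(hS t ht).1, (hS t ht).2]
    · rw [Set.indicator_of_notMem]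
      · push Not at hS
        obtain ⟨t, ht, h⟩ := hS
        exact Finset.prod_eq_zero ht (if_neg fun hh => h hh.1 hh.2)
      · intro h
        refine hS fun t ht => ⟨h _ ?_, h _ ?_⟩
        · exact Finset.mem_image.2 ⟨Sum.inl t, by simp [ht], rfl⟩
        · exact Finset.mem_image.2 ⟨Sum.inr t, by simp [ht], rfl⟩
  have hmeas : ∀ s : Set (ι → Bool), MeasurableSet s := fun s => s.toFinite.measurableSet
  rw [ProbabilityTheory.mgf]
  simp_rw [hexp]
  rw [integral_finsetSum _ fun S _ => Integrable.of_finite]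
  simp_rw [integral_indicator (hmeas _), setIntegral_const,
    measureReal_forall_mem_true h0 h1, hE, smul_eq_mul]
  have := Finset.prod_one_add (f := fun _ : τ => (Real.exp s - 1) * p ^ 2) (s := Finset.univ)
  rw [Finset.prod_const, Finset.card_univ] at this
  rw [this]
  refine Finset.sum_congr rfl fun S _ => ?_
  rw [Finset.prod_const, mul_pow, pow_mul, mul_comm]

lemma mgf_pairCount_le {ι τ : Type*} [Fintype ι] [Fintype τ] {p : ℝ} (h0 : 0 ≤ p) (h1 : p ≤ 1)
    (e₁ e₂ : τ → ι) (hinj : Function.Injective (Sum.elim e₁ e₂)) (s : ℝ) :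
    ProbabilityTheory.mgf (fun ω => (pairCount e₁ e₂ ω : ℝ))
      (Measure.pi (fun _ : ι => bernoulliM p)) s
      ≤ Real.exp (Fintype.card τ * (p ^ 2 * (Real.exp s - 1))) := by
  rw [mgf_pairCount h0 h1 e₁ e₂ hinj s, Real.exp_nat_mul]
  refine pow_le_pow_left₀ ?_ ?_ _
  · nlinarith [Real.exp_pos s, pow_le_one₀ (n := 2) h0 h1, sq_nonneg p]
  · linarith [Real.add_one_le_exp (p ^ 2 * (Real.exp s - 1))]

lemma pairCount_ge_le {ι τ : Type*} [Fintype ι] [Fintype τ] {p : ℝ} (h0 : 0 ≤ p) (h1 : p ≤ 1)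
    (e₁ e₂ : τ → ι) (hinj : Function.Injective (Sum.elim e₁ e₂)) {s : ℝ} (hs : 0 ≤ s) (a : ℝ) :
    (Measure.pi (fun _ : ι => bernoulliM p)).real {ω | a ≤ (pairCount e₁ e₂ ω : ℝ)}
      ≤ Real.exp (-s * a + Fintype.card τ * (p ^ 2 * (Real.exp s - 1))) := by
  have := isProbabilityMeasure_bernoulliM h0 h1
  rw [Real.exp_add]
  refine (ProbabilityTheory.measure_ge_le_exp_mul_mgf a hs Integrable.of_finite).trans ?_
  gcongr
  exact mgf_pairCount_le h0 h1 e₁ e₂ hinj s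

lemma pairCount_le_le {ι τ : Type*} [Fintype ι] [Fintype τ] {p : ℝ} (h0 : 0 ≤ p) (h1 : p ≤ 1)
    (e₁ e₂ : τ → ι) (hinj : Function.Injective (Sum.elim e₁ e₂)) {s : ℝ} (hs : s ≤ 0) (a : ℝ) :
    (Measure.pi (fun _ : ι => bernoulliM p)).real {ω | (pairCount e₁ e₂ ω : ℝ) ≤ a}
      ≤ Real.exp (-s * a + Fintype.card τ * (p ^ 2 * (Real.exp s - 1))) := by
  have := isProbabilityMeasure_bernoulliM h0 h1
  rw [Real.exp_add]
  refine (ProbabilityTheory.measure_le_le_exp_mul_mgf a hs Integrable.of_finite).trans ?_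
  gcongr
  exact mgf_pairCount_le h0 h1 e₁ e₂ hinj s

/-! ### Proper cycles and proper paths in coordinates -/

/-- The cyclic successor `i ↦ i + 1 (mod k)` on the set of parts. -/
def nextPart {k : ℕ} (i : Fin k) : Fin k :=
  ⟨((i : ℕ) + 1) % k, Nat.mod_lt _ (Nat.pos_of_ne_zero fun h => by subst h; exact i.elim0)⟩

lemma nextPart_val {k : ℕ} (i : Fin k) :
    ((nextPart i : Fin k) : ℕ) = if (i : ℕ) + 1 = k then 0 else (i : ℕ) + 1 := by
  have := i.2
  simp only [nextPart]
  split_ifs with h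
  · rw [h, Nat.mod_self]
  · exact Nat.mod_eq_of_lt (by omega)

lemma nextPart_injective {k : ℕ} : Function.Injective (nextPart : Fin k → Fin k) := by
  intro i j h
  have h' := congrArg Fin.val h
  rw [nextPart_val, nextPart_val] at h'
  ext
  split_ifs at h' <;> omega

lemma nextPart_ne {k : ℕ} (hk : 3 ≤ k) (i : Fin k) : nextPart i ≠ i := by
  intro h
  have h' := congrArg Fin.val h
  rw [nextPart_val] at h'
  split_ifs at h' <;> omega

lemma nextPart_nextPart_ne {k : ℕ} (hk : 3 ≤ k) (i : Fin k) : nextPart (nextPart i) ≠ i := by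
  intro h
  have h' := congrArg Fin.val h
  rw [nextPart_val, nextPart_val] at h'
  split_ifs at h' <;> omega

lemma exists_prevPart {k : ℕ} (j : Fin k) : ∃ a : Fin k, nextPart a = j :=
  (Finite.injective_iff_surjective.1 nextPart_injective) j

/-- The cyclic predecessor `j ↦ j - 1 (mod k)` on the set of parts. -/
noncomputable def prevPart {k : ℕ} (j : Fin k) : Fin k := (exists_prevPart j).choose

lemma nextPart_prevPart {k : ℕ} (j : Fin k) : nextPart (prevPart j) = j :=
  (exists_prevPart j).choose_spec

lemma prevPart_ne {k : ℕ} (hk : 3 ≤ k) (j : Fin k) : prevPart j ≠ j := fun h =>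
  nextPart_ne hk (prevPart j) ((nextPart_prevPart j).trans h.symm)

lemma randGraph_adj_iff {k N : ℕ} (hk : 3 ≤ k) (ω : Fin k × Fin N × Fin N → Bool)
    (u v : Fin k × Fin N) :
    (randGraph k N ω).Adj u v ↔
      (nextPart u.1 = v.1 ∧ ω (u.1, u.2, v.2) = true) ∨
      (nextPart v.1 = u.1 ∧ ω (v.1, v.2, u.2) = true) := by
  have h : ∀ a b : Fin k, ((a : ℕ) + 1) % k = (b : ℕ) ↔ nextPart a = b := fun a b => by
    rw [Fin.ext_iff]; rfl
  rw [randGraph, SimpleGraph.fromRel_adj, h, h]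
  refine ⟨fun hh => hh.2, fun hh => ⟨?_, hh⟩⟩
  rintro rfl
  rcases hh with hh | hh <;> exact nextPart_ne hk _ hh.1

lemma randGraph_adj_next {k N : ℕ} (hk : 3 ≤ k) (ω : Fin k × Fin N × Fin N → Bool)
    {u v : Fin k × Fin N} (huv : nextPart u.1 = v.1) :
    (randGraph k N ω).Adj u v ↔ ω (u.1, u.2, v.2) = true := by
  rw [randGraph_adj_iff hk]
  refine ⟨?_, fun h => Or.inl ⟨huv, h⟩⟩
  rintro (h | h)
  · exact h.2
  · exact absurd (by rw [huv]; exact h.1) (nextPart_nextPart_ne hk u.1)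

lemma isProperCycle_iff {k N : ℕ} (hk : 3 ≤ k) (ω : Fin k × Fin N × Fin N → Bool)
    (S : Finset (Fin k × Fin N)) :
    IsProperCycle k (randGraph k N ω) (randPart k N) S ↔
      ∃ v : Fin k → Fin N, S = Finset.univ.image (fun i => (i, v i)) ∧
        ∀ i, ω (i, v i, v (nextPart i)) = true := by
  constructor
  · rintro ⟨w, rfl, hP, hadj⟩
    have hw : ∀ i : Fin k, (w i).1 = i := fun i => Fin.ext (hP i i.2)
    refine ⟨fun i => (w i).2, ?_, fun i => ?_⟩
    · ext x
      simp only [Finset.mem_image, Finset.mem_range, Finset.mem_univ, true_and]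
      constructor
      · rintro ⟨i, hi, rfl⟩
        exact ⟨⟨i, hi⟩, Prod.ext (hw ⟨i, hi⟩).symm rfl⟩
      · rintro ⟨i, rfl⟩
        exact ⟨i, i.2, Prod.ext (hw i) rfl⟩
    · have h := hadj i i.2
      change (randGraph k N ω).Adj (w i) (w (nextPart i : Fin k)) at h
      rw [randGraph_adj_next hk ω (by rw [hw, hw]), hw] at h
      exact h
  · rintro ⟨v, rfl, hv⟩
    have hk0 : 0 < k := by omega
    let w : ℕ → Fin k × Fin N := fun i =>
      if h : i < k then (⟨i, h⟩, v ⟨i, h⟩) else (⟨0, hk0⟩, v ⟨0, hk0⟩)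
    have hw : ∀ i : Fin k, w i = (i, v i) := fun i => by simp [w]
    refine ⟨w, ?_, fun i hi => ?_, fun i hi => ?_⟩
    · ext x
      simp only [Finset.mem_image, Finset.mem_range, Finset.mem_univ, true_and]
      constructor
      · rintro ⟨i, rfl⟩
        exact ⟨i, i.2, hw i⟩
      · rintro ⟨i, hi, rfl⟩
        exact ⟨⟨i, hi⟩, (hw ⟨i, hi⟩).symm⟩
    · rw [hw ⟨i, hi⟩]; rfl
    · have h1 := hw ⟨i, hi⟩
      have h2 := hw (nextPart ⟨i, hi⟩)
      change w ((i + 1) % k) = _ at h2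
      change w i = _ at h1
      rw [h1, h2, randGraph_adj_next hk ω rfl]
      exact hv ⟨i, hi⟩

/-- A proper `(k-1)`-path misses exactly one part `j`, has one vertex `(i, v i)` in every other
part, and consecutive parts other than `j` carry adjacent vertices. The last claim is a count:
the `k - 2` edges of the path join cyclically consecutive parts, distinct edges join distinct
pairs of parts, and only `k - 2` pairs of consecutive parts avoid `j`. -/
lemma IsProperPath.exists_coords {k N : ℕ} (hk : 3 ≤ k) {ω : Fin k × Fin N × Fin N → Bool}
    {B : Finset (Fin k × Fin N)} (hB : IsProperPath k (randGraph k N ω) (randPart k N) B) :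
    ∃ (j : Fin k) (v : Fin k → Fin N), B = (Finset.univ.erase j).image (fun i => (i, v i)) ∧
      ∀ i, i ≠ j → nextPart i ≠ j → ω (i, v i, v (nextPart i)) = true := by
  obtain ⟨w, rfl, -, hadj, hP⟩ := hB
  have hinj : ∀ a < k - 1, ∀ b < k - 1, (w a).1 = (w b).1 → a = b := by
    intro a ha b hb h
    by_contra hne
    exact hP a ha b hb hne (congrArg Fin.val h)
  let Q : Finset (Fin k) := (Finset.range (k - 1)).image fun a => (w a).1
  have hQ : Q.card = k - 1 := by
    rw [Finset.card_image_of_injOn, Finset.card_range]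
    intro a ha b hb h
    exact hinj a (by simpa using ha) b (by simpa using hb) h
  have hQc : (Qᶜ).card = 1 := by
    rw [Finset.card_compl, hQ, Fintype.card_fin]; omega
  obtain ⟨j, hj⟩ := Finset.card_eq_one.1 hQc
  have hmem : ∀ i, i ≠ j ↔ ∃ a < k - 1, (w a).1 = i := by
    intro i
    have : i ∈ Qᶜ ↔ i = j := by rw [hj, Finset.mem_singleton]
    rw [Finset.mem_compl] at this
    rw [Ne, ← this, not_not]
    simp [Q]
  have hidx : ∀ i, ∃ a, i ≠ j → a < k - 1 ∧ (w a).1 = i := by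
    intro i
    by_cases hi : i = j
    · exact ⟨0, fun h => absurd hi h⟩
    · obtain ⟨a, ha⟩ := (hmem i).1 hi
      exact ⟨a, fun _ => ha⟩
  choose idx hidx using hidx
  have hwv : ∀ a < k - 1, w a = ((w a).1, (w (idx (w a).1)).2) := by
    intro a ha
    have h := hidx (w a).1 ((hmem _).2 ⟨a, ha, rfl⟩)
    rw [hinj _ h.1 a ha h.2]
  refine ⟨j, fun i => (w (idx i)).2, ?_, ?_⟩
  · ext x
    simp only [Finset.mem_image, Finset.mem_range, Finset.mem_erase, Finset.mem_univ, and_true]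
    constructor
    · rintro ⟨a, ha, rfl⟩
      exact ⟨(w a).1, (hmem _).2 ⟨a, ha, rfl⟩, (hwv a ha).symm⟩
    · rintro ⟨i, hi, rfl⟩
      exact ⟨idx i, (hidx i hi).1, Prod.ext (hidx i hi).2 rfl⟩
  -- `low a` is the earlier of the two consecutive parts joined by the `a`-th edge of the path.
  · let low : ℕ → Fin k := fun a =>
      if nextPart (w a).1 = (w (a + 1)).1 then (w a).1 else (w (a + 1)).1
    have hlow : ∀ a, a + 1 < k - 1 →
        (low a = (w a).1 ∧ nextPart (low a) = (w (a + 1)).1) ∨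
        (low a = (w (a + 1)).1 ∧ nextPart (low a) = (w a).1) := by
      intro a ha
      rcases (randGraph_adj_iff hk ω _ _).1 (hadj a ha) with h | h
      · left; simp only [low, if_pos h.1, h.1, and_self]
      · by_cases h' : nextPart (w a).1 = (w (a + 1)).1
        · left; simp only [low, if_pos h', h', and_self]
        · right; simp only [low, if_neg h', h.1, and_self]
    have hmaps : ∀ a ∈ Finset.range (k - 2), low a ∈ (Finset.univ.erase j).erase (prevPart j) := by
      intro a ha
      have ha : a < k - 2 := by simpa using ha
      have h1 : (w a).1 ≠ j := (hmem _).2 ⟨a, by omega, rfl⟩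
      have h2 : (w (a + 1)).1 ≠ j := (hmem _).2 ⟨a + 1, by omega, rfl⟩
      simp only [Finset.mem_erase, Finset.mem_univ, and_true]
      have h3 : nextPart (low a) ≠ j ∧ low a ≠ j := by
        rcases hlow a (by omega) with h | h <;> rw [h.2, h.1] <;> exact ⟨by assumption, by assumption⟩
      refine ⟨fun h => h3.1 ?_, h3.2⟩
      rw [h, nextPart_prevPart]
    have hlinj : Set.InjOn low (Finset.range (k - 2)) := by
      intro a ha b hb h
      have ha : a < k - 2 := by simpa using ha
      have hb : b < k - 2 := by simpa using hb
      have hn := congrArg nextPart h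
      have e : ∀ x y, x < k - 1 → y < k - 1 → (w x).1 = (w y).1 → x = y :=
        fun x y hx hy => hinj x hx y hy
      rcases hlow a (by omega) with ⟨h1, h2⟩ | ⟨h1, h2⟩ <;>
        rcases hlow b (by omega) with ⟨h3, h4⟩ | ⟨h3, h4⟩ <;>
        rw [h1, h3] at h <;> rw [h2, h4] at hn <;>
        have q1 := e _ _ (by omega) (by omega) h <;>
        have q2 := e _ _ (by omega) (by omega) hn <;> omega
    have hcard : ((Finset.univ.erase j).erase (prevPart j)).card ≤ (Finset.range (k - 2)).card := by
      rw [Finset.card_erase_of_mem (by simp [prevPart_ne hk]), Finset.card_erase_of_mem (by simp),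
        Finset.card_univ, Fintype.card_fin, Finset.card_range]
      omega
    intro i hij hnij
    obtain ⟨a, ha, hai⟩ := Finset.surjOn_of_injOn_of_card_le low hmaps hlinj hcard
      (show i ∈ _ by
        simp only [Finset.coe_erase, Finset.coe_univ, Set.mem_sdiff, Set.mem_univ,
          Set.mem_singleton_iff, true_and]
        refine ⟨hij, fun h => hnij ?_⟩
        rw [h, nextPart_prevPart])
    have ha : a < k - 2 := by simpa using ha
    have hA := hadj a (by omega)
    rcases hlow a (by omega) with ⟨h1, h2⟩ | ⟨h1, h2⟩
    · rw [hai] at h1 h2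
      rw [randGraph_adj_next hk ω (by rw [← h1, h2])] at hA
      rw [hwv a (by omega), hwv (a + 1) (by omega), ← h1, ← h2] at hA
      exact hA
    · rw [hai] at h1 h2
      rw [SimpleGraph.adj_comm, randGraph_adj_next hk ω (by rw [← h1, h2])] at hA
      rw [hwv a (by omega), hwv (a + 1) (by omega), ← h1, ← h2] at hA
      exact hA

/-- The common neighbours in part `j` of the vertex `x` of part `j - 1` and the vertex `z` of
part `j + 1`. -/
noncomputable def commonNbrs {k N : ℕ} (ω : Fin k × Fin N × Fin N → Bool) (j : Fin k) (x z : Fin N) :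
    Finset (Fin N) :=
  Finset.univ.filter fun u => ω (prevPart j, x, u) = true ∧ ω (j, u, z) = true

/-- The proper cycles extending a path that misses part `j` correspond to the common neighbours
of its two endpoints. -/
lemma isProperCycle_extends_iff {k N : ℕ} (hk : 3 ≤ k) (ω : Fin k × Fin N × Fin N → Bool)
    (j : Fin k) (v : Fin k → Fin N)
    (hv : ∀ i, i ≠ j → nextPart i ≠ j → ω (i, v i, v (nextPart i)) = true)
    (S : Finset (Fin k × Fin N)) :
    (IsProperCycle k (randGraph k N ω) (randPart k N) S ∧
      (Finset.univ.erase j).image (fun i => (i, v i)) ⊆ S) ↔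
    ∃ u ∈ commonNbrs ω j (v (prevPart j)) (v (nextPart j)),
      S = insert (j, u) ((Finset.univ.erase j).image (fun i => (i, v i))) := by
  rw [isProperCycle_iff hk]
  have hpj := prevPart_ne hk j
  have hnj := nextPart_ne hk j
  constructor
  · rintro ⟨⟨v', rfl, hv'⟩, hsub⟩
    have heq : ∀ i, i ≠ j → v' i = v i := by
      intro i hi
      have := hsub (Finset.mem_image_of_mem _ (Finset.mem_erase.2 ⟨hi, Finset.mem_univ i⟩))
      simp only [Finset.mem_image, Finset.mem_univ, true_and, Prod.mk.injEq] at this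
      obtain ⟨a, rfl, h⟩ := this
      exact h
    refine ⟨v' j, ?_, ?_⟩
    · simp only [commonNbrs, Finset.mem_filter, Finset.mem_univ, true_and]
      have h1 := hv' (prevPart j)
      rw [nextPart_prevPart, heq _ hpj] at h1
      have h2 := hv' j
      rw [heq _ hnj] at h2
      exact ⟨h1, h2⟩
    · rw [← Finset.insert_erase (Finset.mem_univ j), Finset.image_insert,
        Finset.erase_insert (Finset.notMem_erase _ _)]
      congr 1
      refine Finset.image_congr fun i hi => ?_
      have hi : i ≠ j := by simpa using hi
      simp only [heq i hi]
  · rintro ⟨u, hu, rfl⟩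
    simp only [commonNbrs, Finset.mem_filter, Finset.mem_univ, true_and] at hu
    refine ⟨⟨Function.update v j u, ?_, fun i => ?_⟩, Finset.subset_insert _ _⟩
    · conv_rhs => rw [← Finset.insert_erase (Finset.mem_univ j), Finset.image_insert]
      rw [Function.update_self]
      congr 1
      refine Finset.image_congr fun i hi => ?_
      have hi : i ≠ j := by simpa using hi
      simp only [Function.update_of_ne hi]
    · by_cases hi : i = j
      · subst hi
        rw [Function.update_self, Function.update_of_ne hnj]
        exact hu.2
      · by_cases hnext : nextPart i = j
        · have : i = prevPart j := nextPart_injective (by rw [hnext, nextPart_prevPart])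
          subst this
          rw [hnext, Function.update_self, Function.update_of_ne hi]
          exact hu.1
        · rw [Function.update_of_ne hi, Function.update_of_ne hnext]
          exact hv i hi hnext

/-! ### Counting extensions of a family of disjoint paths -/

/-- Coordinates for a good family: `jf B` is the part missed by `B`, and `x B`, `z B` are its
vertices in the parts before and after. The sums over `B` of (restricted) numbers of common
neighbours bound `t_𝓑` from below and `y_{A,𝓑}` from above. The last claim holds because a path
missing part `j` has no vertex there, while every other path has only one. -/
lemma IsGoodFamily.exists_endpoints {k N n : ℕ} (hk : 3 ≤ k) (hN : 0 < N)
    {ω : Fin k × Fin N × Fin N → Bool} {𝓑 : Finset (Finset (Fin k × Fin N))}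
    (h𝓑 : IsGoodFamily k (randGraph k N ω) (randPart k N) n 𝓑)
    {A : Finset (Fin k × Fin N)} (hA : A.card ≤ n) :
    ∃ (jf : Finset (Fin k × Fin N) → Fin k) (x z : Finset (Fin k × Fin N) → Fin N),
      (∑ B ∈ 𝓑, (commonNbrs ω (jf B) (x B) (z B)).card
        ≤ tBCount k (randGraph k N ω) (randPart k N) 𝓑) ∧
      (yCount k (randGraph k N ω) (randPart k N) A 𝓑 ≤
        ∑ B ∈ 𝓑, ((commonNbrs ω (jf B) (x B) (z B)).filter
          fun u => (jf B, u) ∈ A ∪ 𝓑.biUnion id).card) ∧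
      (∀ B ∈ 𝓑, ∀ B' ∈ 𝓑, jf B = jf B' → x B = x B' → B = B') ∧
      (∀ B ∈ 𝓑, ∀ B' ∈ 𝓑, jf B = jf B' → z B = z B' → B = B') ∧
      ∀ j, (Finset.univ.filter fun u => (j, u) ∈ A ∪ 𝓑.biUnion id).card
        + (𝓑.filter fun B => jf B = j).card ≤ 2 * n := by
  obtain ⟨hcard, hpath, hdisj⟩ := h𝓑
  have : Nonempty (Fin k) := ⟨⟨0, by omega⟩⟩
  have : Nonempty (Fin N) := ⟨⟨0, hN⟩⟩
  have hcoord := fun B hB => (hpath B hB).exists_coords hk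
  choose! jf v hBv hv using hcoord
  have hmem : ∀ B ∈ 𝓑, ∀ i u, (i, u) ∈ B ↔ i ≠ jf B ∧ v B i = u := by
    intro B hB i u
    conv_lhs => rw [hBv B hB]
    simp only [Finset.mem_image, Finset.mem_erase, Finset.mem_univ, and_true, Prod.mk.injEq]
    constructor
    · rintro ⟨a, ha, rfl, h⟩; exact ⟨ha, h⟩
    · rintro ⟨ha, h⟩; exact ⟨i, ha, rfl, h⟩
  have hBcard : ∀ B ∈ 𝓑, B.card = k - 1 := by
    intro B hB
    rw [hBv B hB, Finset.card_image_of_injective _ fun a b h => (Prod.ext_iff.1 h).1,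
      Finset.card_erase_of_mem (Finset.mem_univ _), Finset.card_univ, Fintype.card_fin]
  have hshare : ∀ B ∈ 𝓑, ∀ B' ∈ 𝓑, ∀ a, a ∈ B → a ∈ B' → B = B' := by
    intro B hB B' hB' a ha ha'
    by_contra hne
    exact Finset.disjoint_left.1 (hdisj B hB B' hB' hne) ha ha'
  have hext : ∀ B ∈ 𝓑, ∀ S, (IsProperCycle k (randGraph k N ω) (randPart k N) S ∧ B ⊆ S) ↔
      ∃ u ∈ commonNbrs ω (jf B) (v B (prevPart (jf B))) (v B (nextPart (jf B))),
        S = insert (jf B, u) B := by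
    intro B hB S
    have h := isProperCycle_extends_iff hk ω (jf B) (v B) (hv B hB) S
    rwa [← hBv B hB] at h
  refine ⟨jf, fun B => v B (prevPart (jf B)), fun B => v B (nextPart (jf B)), ?_, ?_, ?_, ?_, ?_⟩
  · calc ∑ B ∈ 𝓑, (commonNbrs ω (jf B) (v B (prevPart (jf B))) (v B (nextPart (jf B)))).card
        = ∑ B ∈ 𝓑, ((commonNbrs ω (jf B) (v B (prevPart (jf B))) (v B (nextPart (jf B)))).image
            fun u => insert (jf B, u) B).card := by
          refine Finset.sum_congr rfl fun B hB => (Finset.card_image_of_injOn ?_).symm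
          intro u _ u' _ h
          have h1 : (jf B, u) ∈ insert (jf B, u') B := by
            rw [← show insert (jf B, u) B = insert (jf B, u') B from h]
            exact Finset.mem_insert_self _ _
          rcases Finset.mem_insert.1 h1 with h1 | h1
          · exact (Prod.ext_iff.1 h1).2
          · exact absurd rfl ((hmem B hB _ _).1 h1).1
      _ = (𝓑.biUnion fun B =>
            (commonNbrs ω (jf B) (v B (prevPart (jf B))) (v B (nextPart (jf B)))).image
            fun u => insert (jf B, u) B).card := by
          rw [Finset.card_biUnion]
          intro B hB B' hB' hne
          -- Two disjoint paths do not fit into a common cycle, since `2 * (k - 1) > k`.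
          rw [Function.onFun, Finset.disjoint_left]
          intro S hS hS'
          obtain ⟨u, -, rfl⟩ := Finset.mem_image.1 hS
          obtain ⟨w, -, h⟩ := Finset.mem_image.1 hS'
          have hsub : B ⊆ {(jf B', w)} := by
            intro a ha
            have : a ∈ insert (jf B', w) B' := by
              rw [h]; exact Finset.mem_insert_of_mem ha
            rcases Finset.mem_insert.1 this with h1 | h1
            · exact Finset.mem_singleton.2 h1
            · exact absurd (hshare B hB B' hB' a ha h1) hne
          have := Finset.card_le_card hsub
          rw [hBcard B hB, Finset.card_singleton] at this
          omega
      _ ≤ tBCount k (randGraph k N ω) (randPart k N) 𝓑 := by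
          refine Finset.card_le_card fun S hS => ?_
          obtain ⟨B, hB, hS⟩ := Finset.mem_biUnion.1 hS
          obtain ⟨u, hu, rfl⟩ := Finset.mem_image.1 hS
          have h := (hext B hB (insert (jf B, u) B)).2 ⟨u, hu, rfl⟩
          simp only [properCycles, Finset.mem_filter, Finset.mem_univ, true_and]
          exact ⟨h.1, B, hB, h.2⟩
  · calc yCount k (randGraph k N ω) (randPart k N) A 𝓑
        ≤ (𝓑.biUnion fun B =>
            ((commonNbrs ω (jf B) (v B (prevPart (jf B))) (v B (nextPart (jf B)))).filter
              fun u => (jf B, u) ∈ A ∪ 𝓑.biUnion id).image fun u => insert (jf B, u) B).card := by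
          refine Finset.card_le_card fun S hS => ?_
          simp only [properCycles, Finset.mem_filter, Finset.mem_univ, true_and] at hS
          obtain ⟨hS, B, hB, hBS, a, ha, haA⟩ := hS
          obtain ⟨u, hu, rfl⟩ := (hext B hB S).1 ⟨hS, hBS⟩
          rw [Finset.mem_biUnion]
          refine ⟨B, hB, Finset.mem_image.2 ⟨u, Finset.mem_filter.2 ⟨hu, ?_⟩, rfl⟩⟩
          obtain ⟨ha1, ha2⟩ := Finset.mem_sdiff.1 ha
          rcases Finset.mem_insert.1 ha1 with rfl | h
          · exact haA
          · exact absurd h ha2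
      _ ≤ _ := Finset.card_biUnion_le.trans (Finset.sum_le_sum fun B _ => Finset.card_image_le)
  · intro B hB B' hB' hj hx
    refine hshare B hB B' hB' (prevPart (jf B), v B (prevPart (jf B))) ?_ ?_
    · exact (hmem B hB _ _).2 ⟨prevPart_ne hk _, rfl⟩
    · refine (hmem B' hB' _ _).2 ⟨hj ▸ prevPart_ne hk _, ?_⟩
      have hx := hx.symm
      dsimp only at hx
      rwa [hj] at hx ⊢
  · intro B hB B' hB' hj hx
    refine hshare B hB B' hB' (nextPart (jf B), v B (nextPart (jf B))) ?_ ?_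
    · exact (hmem B hB _ _).2 ⟨nextPart_ne hk _, rfl⟩
    · refine (hmem B' hB' _ _).2 ⟨hj ▸ nextPart_ne hk _, ?_⟩
      have hx := hx.symm
      dsimp only at hx
      rwa [hj] at hx ⊢
  · intro j
    have hsub : (Finset.univ.filter fun u => (j, u) ∈ A ∪ 𝓑.biUnion id) ⊆
        A.image Prod.snd ∪ (𝓑.filter fun B => ¬ jf B = j).image fun B => v B j := by
      intro u hu
      simp only [Finset.mem_filter, Finset.mem_univ, true_and, Finset.mem_union,
        Finset.mem_biUnion, id_eq] at hu
      rcases hu with hu | ⟨B, hB, hu⟩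
      · exact Finset.mem_union_left _ (Finset.mem_image.2 ⟨_, hu, rfl⟩)
      · have h := (hmem B hB j u).1 hu
        exact Finset.mem_union_right _
          (Finset.mem_image.2 ⟨B, Finset.mem_filter.2 ⟨hB, fun hh => h.1 hh.symm⟩, h.2⟩)
    have h1 := (Finset.card_le_card hsub).trans (Finset.card_union_le _ _)
    have h2 : (A.image Prod.snd).card ≤ A.card := Finset.card_image_le
    have h3 : ((𝓑.filter fun B => ¬ jf B = j).image fun B => v B j).card
        ≤ (𝓑.filter fun B => ¬ jf B = j).card := Finset.card_image_le
    have h4 := Finset.card_filter_add_card_filter_not (s := 𝓑) (fun B => jf B = j)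
    omega

/-- The number of pairs `(i, u)` with `u ∈ U` a common neighbour in part `j` of the vertices
`f i` of part `j - 1` and `g i` of part `j + 1`. -/
noncomputable def cherryCount {k N m : ℕ} (j : Fin k) (f g : Fin m → Fin N) (U : Finset (Fin N))
    (ω : Fin k × Fin N × Fin N → Bool) : ℕ :=
  pairCount (τ := Fin m × U) (fun t => (prevPart j, f t.1, (t.2 : Fin N)))
    (fun t => (j, (t.2 : Fin N), g t.1)) ω

/-- If all pairs of vertices have at least `D` common neighbours and the pair `(𝓑, A)` is bad,
then for some part `j` the paths missing `j` have many extensions into a fixed set of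
`2 * n - m` vertices of part `j`, where `m` is the number of these paths. -/
lemma exists_cherryCount_ge {k N n r : ℕ} (hk : 3 ≤ k) (hr : 2 ≤ r) (hN : 2 * n ≤ N) (hN0 : 0 < N)
    {ω : Fin k × Fin N × Fin N → Bool} {D T : ℝ} (hDT : n * D / (2 * k * r) = k * T)
    (hD : ∀ j x z, D ≤ ((commonNbrs ω j x z).card : ℝ))
    {𝓑 : Finset (Finset (Fin k × Fin N))}
    (h𝓑 : IsGoodFamily k (randGraph k N ω) (randPart k N) n 𝓑)
    {A : Finset (Fin k × Fin N)} (hA : A.card ≤ n)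
    (hbad : (tBCount k (randGraph k N ω) (randPart k N) 𝓑 : ℝ) / (2 * k * r)
      ≤ (yCount k (randGraph k N ω) (randPart k N) A 𝓑 : ℝ)) :
    ∃ (j : Fin k) (m : Fin (n + 1)) (f g : Fin m ↪ Fin N)
      (U : {U : Finset (Fin N) // U.card = 2 * n - m}), T ≤ (cherryCount j f g U ω : ℝ) := by
  obtain ⟨jf, x, z, ht, hy, hx, hz, hU⟩ := h𝓑.exists_endpoints hk hN0 hA
  have : Nonempty (Fin k) := ⟨⟨0, by omega⟩⟩
  let U : Fin k → Finset (Fin N) := fun j => Finset.univ.filter fun u => (j, u) ∈ A ∪ 𝓑.biUnion id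
  let Y : Fin k → ℕ := fun j => ∑ B ∈ 𝓑.filter (fun B => jf B = j),
    ((commonNbrs ω j (x B) (z B)) ∩ U j).card
  have hysum : yCount k (randGraph k N ω) (randPart k N) A 𝓑 ≤ ∑ j, Y j := by
    refine hy.trans (le_of_eq ?_)
    rw [← Finset.sum_fiberwise 𝓑 jf]
    refine Finset.sum_congr rfl fun j _ => Finset.sum_congr rfl fun B hB => ?_
    rw [(Finset.mem_filter.1 hB).2]
    congr 1
    ext u
    simp [U]
  have htn : (n : ℝ) * D ≤ tBCount k (randGraph k N ω) (randPart k N) 𝓑 := by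
    calc (n : ℝ) * D = ∑ B ∈ 𝓑, D := by rw [Finset.sum_const, h𝓑.1, nsmul_eq_mul]
      _ ≤ ∑ B ∈ 𝓑, ((commonNbrs ω (jf B) (x B) (z B)).card : ℝ) :=
          Finset.sum_le_sum fun B _ => hD _ _ _
      _ ≤ _ := by exact_mod_cast ht
  have hkr : (0 : ℝ) < 2 * k * r := by
    have h1 : (0 : ℝ) < k := by exact_mod_cast (by omega : 0 < k)
    have h2 : (0 : ℝ) < r := by exact_mod_cast (by omega : 0 < r)
    positivity
  have hkT : ∑ _j : Fin k, T ≤ ∑ j, (Y j : ℝ) := by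
    rw [Finset.sum_const, Finset.card_univ, Fintype.card_fin, nsmul_eq_mul, ← hDT]
    calc n * D / (2 * k * r)
        ≤ (tBCount k (randGraph k N ω) (randPart k N) 𝓑 : ℝ) / (2 * k * r) := by gcongr
      _ ≤ _ := hbad
      _ ≤ _ := by exact_mod_cast hysum
  obtain ⟨j, -, hj⟩ := Finset.exists_le_of_sum_le Finset.univ_nonempty hkT
  let 𝓒 := 𝓑.filter fun B => jf B = j
  have hC : ∀ B, B ∈ 𝓒 ↔ B ∈ 𝓑 ∧ jf B = j := fun B => Finset.mem_filter
  have hm : 𝓒.card < n + 1 := by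
    have := Finset.card_filter_le 𝓑 (fun B => jf B = j)
    rw [h𝓑.1] at this
    exact Nat.lt_succ_of_le this
  let e : 𝓒 ≃ Fin 𝓒.card := 𝓒.equivFin
  have hUj : (U j).card ≤ 2 * n - 𝓒.card := by
    have : (U j).card + 𝓒.card ≤ 2 * n := hU j
    omega
  obtain ⟨W, hUW, hW⟩ := Finset.exists_superset_card_eq hUj
    (by rw [Fintype.card_fin]; omega)
  refine ⟨j, ⟨𝓒.card, hm⟩, ⟨fun i => x (e.symm i), ?_⟩, ⟨fun i => z (e.symm i), ?_⟩, ⟨W, hW⟩, ?_⟩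
  · intro a b hab
    have ha := (hC _).1 (e.symm a).2
    have hb := (hC _).1 (e.symm b).2
    exact e.symm.injective (Subtype.ext (hx _ ha.1 _ hb.1 (ha.2.trans hb.2.symm) hab))
  · intro a b hab
    have ha := (hC _).1 (e.symm a).2
    have hb := (hC _).1 (e.symm b).2
    exact e.symm.injective (Subtype.ext (hz _ ha.1 _ hb.1 (ha.2.trans hb.2.symm) hab))
  · refine hj.trans ?_
    norm_cast
    calc Y j = ∑ B : 𝓒, ((commonNbrs ω j (x B) (z B)) ∩ U j).card := by
          rw [Finset.sum_coe_sort 𝓒 fun B => ((commonNbrs ω j (x B) (z B)) ∩ U j).card]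
      _ = ∑ i, ((commonNbrs ω j (x (e.symm i)) (z (e.symm i))) ∩ U j).card :=
          (Equiv.sum_comp e.symm
            fun B : 𝓒 => ((commonNbrs ω j (x B) (z B)) ∩ U j).card).symm
      _ = (Finset.univ.sigma fun i =>
            (commonNbrs ω j (x (e.symm i)) (z (e.symm i))) ∩ U j).card :=
          (Finset.card_sigma _ _).symm
      _ ≤ _ := by
          rw [cherryCount, pairCount]
          refine Finset.card_le_card_of_surjOn (fun t => ⟨t.1, (t.2 : Fin N)⟩) ?_
          rintro ⟨i, u⟩ h
          simp only [Finset.coe_sigma, Set.mem_sigma_iff, Finset.mem_coe, Finset.mem_univ,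
            true_and, Finset.mem_inter, commonNbrs, Finset.mem_filter] at h
          exact ⟨(i, ⟨u, hUW h.2⟩), Finset.mem_filter.2 ⟨Finset.mem_univ _, h.1⟩, rfl⟩

/-! ### Union bounds -/

lemma measureReal_exists_le {Ω ι : Type*} [MeasurableSpace Ω] [Fintype ι] (μ : Measure Ω)
    (P : ι → Ω → Prop) {c : ℝ} (h : ∀ i, μ.real {ω | P i ω} ≤ c) :
    μ.real {ω | ∃ i, P i ω} ≤ Fintype.card ι * c := by
  have hset : {ω | ∃ i, P i ω} = ⋃ i, {ω | P i ω} := by ext; simp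
  rw [hset]
  refine (measureReal_iUnion_fintype_le _).trans ?_
  calc ∑ i, μ.real {ω | P i ω} ≤ ∑ _i : ι, c := Finset.sum_le_sum fun i _ => h i
    _ = Fintype.card ι * c := by rw [Finset.sum_const, Finset.card_univ, nsmul_eq_mul]

lemma measureReal_commonNbrs_le {k N : ℕ} (hk : 3 ≤ k) {p : ℝ} (h0 : 0 ≤ p) (h1 : p ≤ 1)
    {s : ℝ} (hs : s ≤ 0) (a : ℝ) :
    (edgeMeasure k N p).real {ω | ∃ j x z, ((commonNbrs ω j x z).card : ℝ) ≤ a}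
      ≤ k * (N * (N * Real.exp (-s * a + N * (p ^ 2 * (Real.exp s - 1))))) := by
  have hbound : ∀ (j : Fin k) (x z : Fin N),
      (edgeMeasure k N p).real {ω | ((commonNbrs ω j x z).card : ℝ) ≤ a}
        ≤ Real.exp (-s * a + N * (p ^ 2 * (Real.exp s - 1))) := by
    intro j x z
    have h := pairCount_le_le h0 h1 (fun u : Fin N => ((prevPart j, x, u) : Fin k × Fin N × Fin N))
      (fun u => (j, u, z)) ?_ hs a
    · rwa [Fintype.card_fin] at h
    · refine Function.Injective.sumElim ?_ ?_ ?_
      · intro u u' h; simpa using h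
      · intro u u' h; simpa using h
      · intro u u' h; exact prevPart_ne hk j (Prod.ext_iff.1 h).1
  have h1' := fun j x => measureReal_exists_le _ _ (hbound j x)
  have h2 := fun j => measureReal_exists_le _ _ (h1' j)
  have h3 := measureReal_exists_le _ _ h2
  simpa only [Fintype.card_fin] using h3

lemma measureReal_cherryCount_le {k N n : ℕ} (hk : 3 ≤ k) (hN : 0 < N) {p : ℝ} (h0 : 0 ≤ p)
    (h1 : p ≤ 1) {s : ℝ} (hs : 0 ≤ s) (a : ℝ) :
    (edgeMeasure k N p).real {ω | ∃ (j : Fin k) (m : Fin (n + 1)) (f g : Fin m ↪ Fin N)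
      (U : {U : Finset (Fin N) // U.card = 2 * n - m}), a ≤ (cherryCount j f g U ω : ℝ)}
      ≤ k * ((n + 1) * ((N : ℝ) ^ (3 * n) *
          Real.exp (-s * a + n ^ 2 * (p ^ 2 * (Real.exp s - 1))))) := by
  set E := Real.exp (-s * a + n ^ 2 * (p ^ 2 * (Real.exp s - 1))) with hE
  have hbound : ∀ (j : Fin k) (m : Fin (n + 1)) (f g : Fin m ↪ Fin N)
      (U : {U : Finset (Fin N) // U.card = 2 * n - m}),
      (edgeMeasure k N p).real {ω | a ≤ (cherryCount j f g U ω : ℝ)} ≤ E := by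
    intro j m f g U
    have h := pairCount_ge_le h0 h1 (τ := Fin m × U.1)
      (fun t => ((prevPart j, f t.1, (t.2 : Fin N)) : Fin k × Fin N × Fin N))
      (fun t => (j, (t.2 : Fin N), g t.1)) ?_ hs a
    · refine h.trans ?_
      rw [hE, Fintype.card_prod, Fintype.card_fin, Fintype.card_coe, U.2]
      have hm : (m : ℕ) ≤ n := Nat.lt_succ_iff.1 m.2
      -- `m (2n - m) ≤ n²` keeps the expected number of pairs below `n² p²`.
      have hle : (((m : ℕ) * (2 * n - m) : ℕ) : ℝ) ≤ (n : ℝ) ^ 2 := by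
        rw [Nat.cast_mul, Nat.cast_sub (by omega)]
        push_cast
        nlinarith [sq_nonneg ((n : ℝ) - (m : ℕ))]
      have : 0 ≤ p ^ 2 * (Real.exp s - 1) :=
        mul_nonneg (sq_nonneg p) (by linarith [Real.add_one_le_exp s])
      gcongr
    · refine Function.Injective.sumElim ?_ ?_ ?_
      · rintro ⟨i, u⟩ ⟨i', u'⟩ h
        simp only [Prod.mk.injEq, true_and] at h
        exact Prod.ext (f.injective h.1) (Subtype.ext h.2)
      · rintro ⟨i, u⟩ ⟨i', u'⟩ h
        simp only [Prod.mk.injEq, true_and] at h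
        exact Prod.ext (g.injective h.2) (Subtype.ext h.1)
      · intro u u' h; exact prevPart_ne hk j (Prod.ext_iff.1 h).1
  have hm : ∀ (j : Fin k) (m : Fin (n + 1)), (edgeMeasure k N p).real {ω | ∃ (f g : Fin m ↪ Fin N)
      (U : {U : Finset (Fin N) // U.card = 2 * n - m}), a ≤ (cherryCount j f g U ω : ℝ)}
      ≤ (N : ℝ) ^ (3 * n) * E := by
    intro j m
    have e1 := fun f g => measureReal_exists_le _ _ (hbound j m f g)
    have e2 := fun f => measureReal_exists_le _ _ (e1 f)
    have e3 := measureReal_exists_le _ _ e2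
    refine e3.trans ?_
    have hE0 : 0 ≤ E := (Real.exp_pos _).le
    have hm : (m : ℕ) ≤ n := Nat.lt_succ_iff.1 m.2
    have hemb : Fintype.card (Fin m ↪ Fin N) ≤ N ^ (m : ℕ) := by
      rw [Fintype.card_embedding_eq, Fintype.card_fin, Fintype.card_fin]
      exact Nat.descFactorial_le_pow _ _
    have hsub : Fintype.card {U : Finset (Fin N) // U.card = 2 * n - m} ≤ N ^ (2 * n - m : ℕ) := by
      rw [Fintype.card_finset_len, Fintype.card_fin]
      exact Nat.choose_le_pow _ _
    have hprod : Fintype.card (Fin m ↪ Fin N) * (Fintype.card (Fin m ↪ Fin N) *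
        Fintype.card {U : Finset (Fin N) // U.card = 2 * n - m}) ≤ N ^ (3 * n) := by
      calc _ ≤ N ^ (m : ℕ) * (N ^ (m : ℕ) * N ^ (2 * n - m : ℕ)) := by gcongr
        _ = N ^ (2 * n + m : ℕ) := by
          rw [← pow_add, ← pow_add]; congr 1; omega
        _ ≤ N ^ (3 * n) := Nat.pow_le_pow_right hN (by omega)
    rw [← mul_assoc, ← mul_assoc, mul_assoc (Fintype.card (Fin m ↪ Fin N) : ℝ)]
    refine mul_le_mul_of_nonneg_right ?_ hE0
    exact_mod_cast hprod
  have h4 := fun j => measureReal_exists_le _ _ (hm j)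
  have h5 := measureReal_exists_le _ _ h4
  simpa only [Fintype.card_fin, Nat.cast_add, Nat.cast_one] using h5

/-! ### Asymptotics -/

/-- With `L = log n` and `p² = L / n`, both union bounds are at most a constant over `n`:
thresholds `(3/4) C L` for common neighbours and `6 n L` for extensions leave room against
`k N²` and `k (n + 1) N ^ (3 n)` choices respectively. -/
lemma total_bound_le {k C n : ℕ} (hC : 288 ≤ C) (hn : C ^ 4 ≤ n) {p : ℝ}
    (hp : p ^ 2 = Real.log n / n) :
    (k : ℝ) * ((C * n : ℕ) * ((C * n : ℕ) * Real.exp (-(-1 / 4) * (3 / 4 * C * Real.log n)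
        + (C * n : ℕ) * (p ^ 2 * (Real.exp (-1 / 4) - 1)))))
      + k * ((n + 1) * (((C * n : ℕ) : ℝ) ^ (3 * n) *
          Real.exp (-1 * (6 * n * Real.log n) + n ^ 2 * (p ^ 2 * (Real.exp 1 - 1)))))
      ≤ 3 * k / n := by
  have hnC : C ≤ n := (Nat.le_self_pow (by norm_num) C).trans hn
  have hn0 : (0 : ℝ) < n := by exact_mod_cast (by omega : 0 < n)
  have hn4 : (4 : ℝ) ≤ n := by exact_mod_cast (by omega : 4 ≤ n)
  have hC' : (288 : ℝ) ≤ C := by exact_mod_cast hC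
  have hC0 : (0 : ℝ) < C := by linarith
  have hn' : (C : ℝ) ^ 4 ≤ n := by exact_mod_cast hn
  set L := Real.log n with hL
  have hL0 : 0 ≤ L := Real.log_nonneg (by linarith)
  have hexpL : Real.exp L = n := Real.exp_log hn0
  have hCL : 4 * Real.log C ≤ L := by
    rw [hL, ← Real.log_rpow hC0]
    refine Real.log_le_log (Real.rpow_pos_of_pos hC0 _) ?_
    have : (C : ℝ) ^ (4 : ℝ) = (C : ℝ) ^ (4 : ℕ) := by exact_mod_cast Real.rpow_natCast (C : ℝ) 4
    rw [this]; exact hn'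
  have hpn : (n : ℝ) * p ^ 2 = L := by rw [hp]; field_simp
  have hkn : (0 : ℝ) ≤ k := Nat.cast_nonneg k
  have first : (k : ℝ) * ((C * n : ℕ) * ((C * n : ℕ) * Real.exp (-(-1 / 4) * (3 / 4 * C * L)
        + (C * n : ℕ) * (p ^ 2 * (Real.exp (-1 / 4) - 1))))) ≤ k / n := by
    have he : Real.exp (-1 / 4) ≤ 25 / 32 := by
      have h : 32 / 25 ≤ Real.exp (1 / 4) :=
        le_trans (by norm_num) (Real.quadratic_le_exp_of_nonneg (x := 1 / 4) (by norm_num))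
      rw [neg_div, Real.exp_neg]
      exact (inv_anti₀ (by norm_num) h).trans (by norm_num)
    have hexp : Real.exp (-(-1 / 4) * (3 / 4 * C * L)
        + (C * n : ℕ) * (p ^ 2 * (Real.exp (-1 / 4) - 1))) ≤ ((n : ℝ) ^ 9)⁻¹ := by
      rw [← hexpL, ← Real.exp_nat_mul, ← Real.exp_neg]
      refine Real.exp_le_exp.2 ?_
      have e1 : ((C * n : ℕ) : ℝ) * (p ^ 2 * (Real.exp (-1 / 4) - 1))
          = C * L * (Real.exp (-1 / 4) - 1) := by rw [← hpn]; push_cast; ring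
      rw [e1]
      have hCLp : 288 * L ≤ C * L := by gcongr
      push_cast
      nlinarith [mul_nonneg hC0.le hL0]
    have hCn : (C : ℝ) ^ 2 ≤ n := by
      refine le_trans ?_ hn'
      exact pow_le_pow_right₀ (by linarith) (by norm_num)
    calc _ ≤ (k : ℝ) * ((C * n : ℕ) * ((C * n : ℕ) * ((n : ℝ) ^ 9)⁻¹)) := by gcongr
      _ = k * (C ^ 2 * n ^ 2 * ((n : ℝ) ^ 9)⁻¹) := by push_cast; ring
      _ ≤ k * (n * n ^ 2 * ((n : ℝ) ^ 9)⁻¹) := by gcongr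
      _ = k * ((n : ℝ) ^ 6)⁻¹ := by field_simp
      _ ≤ k * (n : ℝ)⁻¹ := by
          gcongr
          exact le_self_pow₀ (by linarith) (by norm_num)
      _ = k / n := by rw [div_eq_mul_inv]
  have second : (k : ℝ) * ((n + 1) * (((C * n : ℕ) : ℝ) ^ (3 * n) *
          Real.exp (-1 * (6 * n * L) + n ^ 2 * (p ^ 2 * (Real.exp 1 - 1))))) ≤ 2 * k / n := by
    have hCn0 : (0 : ℝ) < (C * n : ℕ) := by push_cast; positivity
    have hpow : ((C * n : ℕ) : ℝ) ^ (3 * n) = Real.exp ((3 * n : ℕ) * (Real.log C + L)) := by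
      rw [Real.exp_nat_mul, Real.exp_add, hexpL, Real.exp_log hC0]
      push_cast; ring
    have hexp : ((C * n : ℕ) : ℝ) ^ (3 * n) *
          Real.exp (-1 * (6 * n * L) + n ^ 2 * (p ^ 2 * (Real.exp 1 - 1))) ≤ ((n : ℝ) ^ 2)⁻¹ := by
      rw [hpow, ← Real.exp_add]
      calc _ ≤ Real.exp (-((2 : ℕ) * L)) := by
            refine Real.exp_le_exp.2 ?_
            have e1 : (n : ℝ) ^ 2 * (p ^ 2 * (Real.exp 1 - 1)) = n * L * (Real.exp 1 - 1) := by
              rw [← hpn]; ring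
            rw [e1]
            have hnL : 0 ≤ n * L := by positivity
            have h1 : (n : ℝ) * L * (Real.exp 1 - 1) ≤ n * L * (7 / 4) :=
              mul_le_mul_of_nonneg_left (by linarith [Real.exp_one_lt_d9]) hnL
            have h2 : (n : ℝ) * Real.log C ≤ n * (L / 4) :=
              mul_le_mul_of_nonneg_left (by linarith) hn0.le
            have h3 : 4 * L ≤ n * L := mul_le_mul_of_nonneg_right hn4 hL0
            push_cast
            linarith
        _ = ((n : ℝ) ^ 2)⁻¹ := by rw [Real.exp_neg, Real.exp_nat_mul, hexpL]
    calc _ ≤ (k : ℝ) * ((n + n) * ((n : ℝ) ^ 2)⁻¹) := by gcongr; linarith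
      _ = 2 * k / n := by field_simp; ring
  calc _ ≤ (k : ℝ) / n + 2 * k / n := add_le_add first second
    _ = 3 * k / n := by ring

/-! ### Conclusion -/

/-- For fixed `k ≥ 3` and `r ≥ 2`, with `c = 16k²r` and `p = √(log n / n)`, the probability
that in `G(k, cn, p)` there exist a family `𝓑` of `n` pairwise vertex-disjoint proper
`(k-1)`-paths and a set `A ⊆ V(G) \ ⋃_{B∈𝓑} V(B)` with `|A| ≤ n` such that
`y_{A,𝓑} ≥ t_𝓑 / (2kr)` tends to `0` as `n → ∞`. -/
theorem prob_bad_y_tendsto_zero (k r : ℕ) (hk : 3 ≤ k) (hr : 2 ≤ r) :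
    Filter.Tendsto
      (fun n : ℕ =>
        edgeMeasure k (16 * k ^ 2 * r * n) (Real.sqrt (Real.log n / n))
          {ω | ∃ (𝓑 : Finset (Finset (Fin k × Fin (16 * k ^ 2 * r * n))))
                 (A : Finset (Fin k × Fin (16 * k ^ 2 * r * n))),
              IsGoodFamily k (randGraph k (16 * k ^ 2 * r * n) ω)
                (randPart k (16 * k ^ 2 * r * n)) n 𝓑 ∧
              A ⊆ Finset.univ \ 𝓑.biUnion id ∧ A.card ≤ n ∧
              (tBCount k (randGraph k (16 * k ^ 2 * r * n) ω)
                  (randPart k (16 * k ^ 2 * r * n)) 𝓑 : ℝ) / (2 * k * r)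
                ≤ (yCount k (randGraph k (16 * k ^ 2 * r * n) ω)
                    (randPart k (16 * k ^ 2 * r * n)) A 𝓑 : ℝ)})
      Filter.atTop (nhds 0) := by
  have hk0 : (0 : ℝ) < k := by exact_mod_cast (by omega : 0 < k)
  have hr0 : (0 : ℝ) < r := by exact_mod_cast (by omega : 0 < r)
  have hC : 288 ≤ 16 * k ^ 2 * r := by
    have h9 : 3 ^ 2 ≤ k ^ 2 := Nat.pow_le_pow_left hk 2
    calc 288 = 16 * 3 ^ 2 * 2 := by norm_num
      _ ≤ 16 * k ^ 2 * r := by gcongr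
  have hlim : Filter.Tendsto (fun n : ℕ => ENNReal.ofReal (3 * k / n)) Filter.atTop (nhds 0) := by
    have h := ENNReal.tendsto_ofReal (tendsto_const_div_atTop_nhds_zero_nat (3 * (k : ℝ)))
    rwa [ENNReal.ofReal_zero] at h
  refine tendsto_of_tendsto_of_tendsto_of_le_of_le' tendsto_const_nhds hlim
    (Filter.Eventually.of_forall fun _ => zero_le) ?_
  filter_upwards [Filter.eventually_ge_atTop ((16 * k ^ 2 * r) ^ 4)] with n hn
  generalize hCdef : 16 * k ^ 2 * r = C at *
  have hCr : (C : ℝ) = 16 * k ^ 2 * r := by rw [← hCdef]; push_cast; ring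
  have hnC : C ≤ n := (Nat.le_self_pow (by norm_num) C).trans hn
  have hn0 : (0 : ℝ) < n := by exact_mod_cast (by omega : 0 < n)
  have hlog0 : 0 ≤ Real.log n := Real.log_nonneg (by exact_mod_cast (by omega : 1 ≤ n))
  set p := Real.sqrt (Real.log n / n) with hp
  have hp0 : 0 ≤ p := Real.sqrt_nonneg _
  have hp2 : p ^ 2 = Real.log n / n := Real.sq_sqrt (by positivity)
  have hp1 : p ≤ 1 := by
    rw [hp, Real.sqrt_le_one, div_le_one hn0]
    exact Real.log_le_self hn0.le
  have hNpos : 0 < C * n := Nat.mul_pos (by omega) (by omega)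
  have : IsProbabilityMeasure (bernoulliM p) := isProbabilityMeasure_bernoulliM hp0 hp1
  have : IsProbabilityMeasure (edgeMeasure k (C * n) p) := by
    unfold edgeMeasure; infer_instance
  rw [← ofReal_measureReal]
  refine ENNReal.ofReal_le_ofReal ?_
  refine le_trans ?_ (total_bound_le (k := k) hC hn hp2)
  refine le_trans ?_ (add_le_add
    (measureReal_commonNbrs_le hk hp0 hp1 (by norm_num) (3 / 4 * C * Real.log n))
    (measureReal_cherryCount_le (n := n) hk hNpos hp0 hp1 zero_le_one (6 * n * Real.log n)))
  refine le_trans (measureReal_mono ?_) (measureReal_union_le _ _)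
  rintro ω ⟨𝓑, A, h𝓑, -, hA, hbad⟩
  by_cases hD : ∃ j x z, ((commonNbrs ω j x z).card : ℝ) ≤ 3 / 4 * C * Real.log n
  · exact Or.inl hD
  · push Not at hD
    refine Or.inr (exists_cherryCount_ge hk hr (by gcongr; omega) hNpos ?_
      (fun j x z => (hD j x z).le) h𝓑 hA hbad)
    rw [hCr]
    field_simp
    ring
end
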